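/- Let L_A and L_C be lattices with a least element, and suppose L_C has more than one element. Then there exist a lattice L with a least element and injective, zero-preserving lattice homomorphisms f : L_A → L and g : L_C → L such that: (1) g is congruence-preserving, i.e., for every lattice congruence θ of L_C there is exactly one lattice congruence Θ of L with Θ(g x, g y) if and only if θ(x, y) for all x, y ∈ L_C; and (2) f is automorphism-preserving, i.e., for every lattice automorphism α of L_A there is exactly one lattice automorphism β of L with β ∘ f = f ∘ α, and conversely every lattice automorphism β of L satisfies β ∘ f = f ∘ α for some lattice automorphism α of L_A. -/

import Mathlib

/-!
The lattice `L` is obtained from `Lc` by three congruence-preserving extensions, the last of which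
encodes `La`.

*Box construction.* For a bounded lattice `S` and a lattice `C` with zero, `Box m` consists of the
finite intersections of boxes `{(s, z) | s ≤ α ∨ z ≤ β}` in `S × C`, bounded in the second
coordinate. A marking `m` assigns to each `α` a threshold in `C` below which `β` may not drop; it is
nonzero only at coatoms. If `S` is simple in a suitably strong sense (`SepHyp`, `SimpleHyp`),
the embedding `D` of `C` by constants is congruence-preserving (`cpEmb_D`): the extension of `θ`
relates sets whose columns agree modulo `θ`, and simplicity of `S` forces uniqueness.

*Frame.* `Frame A J` is a bounded lattice containing `A`, atoms `p j` and a chain `c j` indexed by a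
well-order `J`, together with coatoms `a' x`, `p' j` over `a x`, `p j` that make it simple. The
threshold at `p' j` is `t j`, where `t : J → C` is a surjection taking the value `⊥` very often, and
`J` is much larger than `A` and `C`.

*Automorphisms.* Let `β` be an automorphism of `Box m` over such a frame. The constants are the
elements with `J` many pairwise complementary elements below them, so `β (D y) = D (γ y)` for an
automorphism `γ` of `C` (`exists_gamma`). If `C` contains a nonzero `x` which is a node in enough
principal ideals (`NodeHyp`), then `β` maps `gen s y`, the least element containing `(s, y)`, to some
`gen s' (γ y)` with `s'` independent of `y`, provided the threshold of `s` is disjoint from `x`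
(`exists_lin`); this covers `A`, all `p j` and all `c j`. The resulting map `s ↦ s'` preserves `A`
and, since `J` is well-ordered, fixes every `p j` and `c j`. The threshold `t j` can be recovered from
`gen (p j) y`, `gen (c j) y` and `D y` (`le_t_iff`), so `γ` fixes all thresholds; as `t` is surjective,
`γ = id`. Thus `β` is determined by its action on `A` (`exists_action`, `eq_refl_of_fix`), and conversely
each automorphism of `A` acts on the frame and hence on `Box m`. So `a ↦ gen a x` is
automorphism-preserving (`apEmb_gen`).

*Nodes.* To provide `x`, first pass from `Lc` to its box lattice over a fixed simple lattice `T`, in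
which some nonzero `x` is not maximal, and then glue on, along the filter above `x`, the box lattice of
this filter over `T`. The result, `Glue x`, is again a congruence-preserving extension, and `x` is a node
in it (`Glue.exists_nodes`).

A one-element `La` is replaced by `WithTop La`, which also has no automorphism but the identity.
-/

universe u

/-- A lattice congruence. -/
def LatCon (L : Type*) [Lattice L] (θ : L → L → Prop) : Prop :=
  Equivalence θ ∧
  ∀ a b c d : L, θ a b → θ c d → θ (a ⊔ c) (b ⊔ d) ∧ θ (a ⊓ c) (b ⊓ d)

/-- A lattice automorphism: a bijection preserving joins and meets. -/
def IsLatAuto (L : Type*) [Lattice L] (h : L → L) : Prop :=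
  Function.Bijective h ∧
  (∀ x y : L, h (x ⊔ y) = h x ⊔ h y) ∧ ∀ x y : L, h (x ⊓ y) = h x ⊓ h y

/-- A congruence-preserving lattice embedding: injective lattice homomorphism such
that every congruence of the source extends to exactly one congruence of the
target. -/
def CPEmb (Lc : Type*) [Lattice Lc] (L : Type*) [Lattice L] (g : Lc → L) : Prop :=
  Function.Injective g ∧
  (∀ x y : Lc, g (x ⊔ y) = g x ⊔ g y) ∧ (∀ x y : Lc, g (x ⊓ y) = g x ⊓ g y) ∧
  ∀ θ : Lc → Lc → Prop, LatCon Lc θ →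
    ∃! Θ : L → L → Prop, LatCon L Θ ∧ ∀ x y : Lc, (Θ (g x) (g y) ↔ θ x y)

/-- An automorphism-preserving lattice embedding: injective lattice homomorphism
such that every automorphism of the source extends to exactly one automorphism of
the target, and every automorphism of the target is such an extension. -/
def APEmb (La : Type*) [Lattice La] (L : Type*) [Lattice L] (f : La → L) : Prop :=
  Function.Injective f ∧
  (∀ x y : La, f (x ⊔ y) = f x ⊔ f y) ∧ (∀ x y : La, f (x ⊓ y) = f x ⊓ f y) ∧
  (∀ α : La → La, IsLatAuto La α →
    ∃! β : L → L, IsLatAuto L β ∧ ∀ x : La, β (f x) = f (α x)) ∧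
  (∀ β : L → L, IsLatAuto L β →
    ∃ α : La → La, IsLatAuto La α ∧ ∀ x : La, β (f x) = f (α x))

/-- The witness property for the Strong Independence Theorem for lattices with zero:
`f` and `g` are zero-preserving (they map the zeros to a least element of `L`),
`f` is automorphism-preserving, and `g` is congruence-preserving. -/
def StrongIndWitness₀ (La Lc : Type u) [Lattice La] [OrderBot La]
    [Lattice Lc] [OrderBot Lc] (L : Type u) [Lattice L]
    (f : La → L) (g : Lc → L) : Prop :=
  IsBot (f ⊥) ∧ IsBot (g ⊥) ∧ APEmb La L f ∧ CPEmb Lc L g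

set_option linter.unusedSectionVars false
set_option linter.unusedVariables false

/-! ### The box lattice -/

namespace StrongInd

/-- A threshold `thr s : C` for every `s : S`, vanishing at `⊥` and `⊤`. By `eq_top`, only
`⊤` lies strictly above an element with nonzero threshold; hence raising the second coordinate of a
corner to the threshold does not lead out of any larger box that respects the thresholds. -/
structure Marking (S C : Type*) [Lattice S] [BoundedOrder S] [Lattice C] [OrderBot C] where
  thr : S → C
  thr_bot : thr ⊥ = ⊥
  thr_top : thr ⊤ = ⊥
  eq_top : ∀ a b, a < b → thr a ≠ ⊥ → b = ⊤

section Box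

variable {S C : Type*} [Lattice S] [BoundedOrder S] [Lattice C] [OrderBot C]

/-- `p` lies in the box with corner `q = (α, β)`, the set of points with first coordinate below `α`
or second coordinate below `β`. -/
def InBox (q p : S × C) : Prop := p.1 ≤ q.1 ∨ p.2 ≤ q.2

lemma InBox.mono {q q' p : S × C} (h : InBox q p) (h1 : q.1 ≤ q'.1) (h2 : q.2 ≤ q'.2) :
    InBox q' p := h.imp (fun h => h.trans h1) (fun h => h.trans h2)

lemma InBox.anti {q p p' : S × C} (h : InBox q p) (h1 : p' ≤ p) : InBox q p' :=
  h.imp (fun h => h1.1.trans h) (fun h => h1.2.trans h)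

/-- Finite intersections of allowed boxes, those whose corner `(α, β)` satisfies `thr α ≤ β`. One of
them must have the form `(⊥, b)`, so that outside the column of `⊥` the second coordinates are
bounded by `b`. -/
def IsElt (m : Marking S C) (H : Set (S × C)) : Prop :=
  ∃ B : List (S × C), (∀ q ∈ B, m.thr q.1 ≤ q.2) ∧ (∃ b, (⊥, b) ∈ B) ∧
    ∀ p, p ∈ H ↔ ∀ q ∈ B, InBox q p

/-- The box lattice: a version of the box product of `S` and `C` in which a box with first corner
`α` is admitted only above the threshold of `α`. It is ordered by inclusion. -/
def Box (m : Marking S C) : Type _ := {H : Set (S × C) // IsElt m H}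

variable {m : Marking S C}

instance : PartialOrder (Box m) := inferInstanceAs (PartialOrder {H : Set (S × C) // IsElt m H})

instance : Membership (S × C) (Box m) := ⟨fun H p => p ∈ H.1⟩

lemma Box.le_def {H K : Box m} : H ≤ K ↔ ∀ p, p ∈ H → p ∈ K := Iff.rfl

lemma Box.ext {H K : Box m} (h : ∀ p, p ∈ H ↔ p ∈ K) : H = K :=
  le_antisymm (fun p hp => (h p).1 hp) (fun p hp => (h p).2 hp)

/-- Corners of boxes containing the given points: each point is absorbed by enlarging one of the two
coordinates. Every box containing the points contains one of these. -/
def ub : List (S × C) → List (S × C)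
  | [] => [(⊥, ⊥)]
  | p :: l => (ub l).flatMap fun q => [(q.1 ⊔ p.1, q.2), (q.1, q.2 ⊔ p.2)]

lemma inBox_of_mem_ub {l : List (S × C)} {q p : S × C} (hq : q ∈ ub l) (hp : p ∈ l) :
    InBox q p := by
  induction l generalizing q with
  | nil => simp at hp
  | cons r l ih =>
    simp only [ub, List.mem_flatMap, List.mem_cons, List.not_mem_nil, or_false] at hq
    obtain ⟨q0, hq0, h⟩ := hq
    rcases List.mem_cons.1 hp with rfl | hp
    · rcases h with rfl | rfl
      · exact Or.inl le_sup_right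
      · exact Or.inr le_sup_right
    · rcases h with rfl | rfl
      · exact (ih hq0 hp).mono le_sup_left le_rfl
      · exact (ih hq0 hp).mono le_rfl le_sup_left

lemma exists_ub_le {l : List (S × C)} {q : S × C} (h : ∀ p ∈ l, InBox q p) :
    ∃ q0 ∈ ub l, q0 ≤ q := by
  induction l with
  | nil => exact ⟨(⊥, ⊥), by simp [ub], by constructor <;> simp⟩
  | cons r l ih =>
    obtain ⟨q0, hq0, hle⟩ := ih fun p hp => h p (List.mem_cons_of_mem _ hp)
    rcases h r List.mem_cons_self with h | h
    · exact ⟨_, List.mem_flatMap.2 ⟨q0, hq0, List.mem_cons_self⟩, sup_le hle.1 h, hle.2⟩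
    · exact ⟨_, List.mem_flatMap.2 ⟨q0, hq0, List.mem_cons_of_mem _ List.mem_cons_self⟩,
        hle.1, sup_le hle.2 h⟩

lemma exists_bot_mem_ub (l : List (S × C)) : ∃ b, ((⊥ : S), b) ∈ ub l := by
  induction l with
  | nil => exact ⟨⊥, by simp [ub]⟩
  | cons r l ih =>
    obtain ⟨b, hb⟩ := ih
    exact ⟨b ⊔ r.2, List.mem_flatMap.2 ⟨_, hb, by simp⟩⟩

/-- The boxes of `ub l`, enlarged to allowed ones. -/
def ubT (m : Marking S C) (l : List (S × C)) : List (S × C) :=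
  (ub l).map fun q => (q.1, q.2 ⊔ m.thr q.1)

/-- The least element of `Box m` containing the given finitely many points; see `cl_le`. -/
def cl (m : Marking S C) (l : List (S × C)) : Box m :=
  ⟨{p | ∀ q ∈ ubT m l, InBox q p}, ubT m l, by
    intro q hq
    obtain ⟨q0, -, rfl⟩ := List.mem_map.1 hq
    exact le_sup_right, by
    obtain ⟨b, hb⟩ := exists_bot_mem_ub l
    exact ⟨b, List.mem_map.2 ⟨_, hb, by simp [m.thr_bot]⟩⟩, fun p => Iff.rfl⟩

lemma mem_cl {l : List (S × C)} {p : S × C} : p ∈ cl m l ↔ ∀ q ∈ ubT m l, InBox q p := Iff.rfl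

lemma mem_cl_of_mem {l : List (S × C)} {p : S × C} (hp : p ∈ l) : p ∈ cl m l := by
  intro q hq
  obtain ⟨q0, hq0, rfl⟩ := List.mem_map.1 hq
  exact (inBox_of_mem_ub hq0 hp).mono le_rfl le_sup_left

/-- An allowed box containing a list contains its closure. -/
lemma inBox_of_mem_cl {l : List (S × C)} {q p : S × C} (hq : m.thr q.1 ≤ q.2)
    (h : ∀ p ∈ l, InBox q p) (hp : p ∈ cl m l) : InBox q p := by
  obtain ⟨q0, hq0, hle⟩ := exists_ub_le h
  have h0 := hp (q0.1, q0.2 ⊔ m.thr q0.1) (List.mem_map.2 ⟨q0, hq0, rfl⟩)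
  rcases eq_or_lt_of_le hle.1 with he | hlt
  · exact h0.mono hle.1 (sup_le hle.2 (by rw [he]; exact hq))
  · by_cases ht : m.thr q0.1 = ⊥
    · exact h0.mono hle.1 (sup_le hle.2 (by simp [ht]))
    · exact Or.inl (by rw [m.eq_top _ _ hlt ht]; exact le_top)

lemma cl_le {l : List (S × C)} {H : Box m} : cl m l ≤ H ↔ ∀ p ∈ l, p ∈ H := by
  constructor
  · intro h p hp
    exact h (mem_cl_of_mem hp)
  · intro h p hp
    obtain ⟨B, hB, -, hH⟩ := H.2
    refine (hH p).2 fun q hq => inBox_of_mem_cl (hB q hq) (fun p hp => (hH p).1 (h p hp) q hq) hp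

lemma exists_rects (l0 B : List (S × C)) : ∃ l : List (S × C), ∀ p : S × C,
    ((p.1 = ⊥ ∨ p.2 = ⊥ ∨ ∃ r ∈ l0, p ≤ r) ∧ ∀ q ∈ B, InBox q p) ↔
      (p.1 = ⊥ ∨ p.2 = ⊥ ∨ ∃ r ∈ l, p ≤ r) := by
  induction B generalizing l0 with
  | nil => exact ⟨l0, by simp⟩
  | cons q B ih =>
    obtain ⟨l, hl⟩ := ih (l0.flatMap fun r => [(r.1 ⊓ q.1, r.2), (r.1, r.2 ⊓ q.2)])
    refine ⟨l, fun p => ?_⟩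
    rw [← hl p]
    simp only [List.mem_cons, forall_eq_or_imp, List.mem_flatMap, List.not_mem_nil, or_false]
    rw [← and_assoc]
    refine and_congr_left fun _ => ?_
    by_cases h1 : p.1 = ⊥
    · simp [h1, InBox]
    by_cases h2 : p.2 = ⊥
    · simp [h2, InBox]
    simp only [h1, h2, false_or]
    constructor
    · rintro ⟨⟨r, hr, hpr⟩, h | h⟩
      · exact ⟨_, ⟨r, hr, Or.inl rfl⟩, le_inf hpr.1 h, hpr.2⟩
      · exact ⟨_, ⟨r, hr, Or.inr rfl⟩, hpr.1, le_inf hpr.2 h⟩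
    · rintro ⟨r', ⟨r, hr, rfl | rfl⟩, hpr⟩
      · exact ⟨⟨r, hr, hpr.1.trans inf_le_left, hpr.2⟩, Or.inl (hpr.1.trans inf_le_right)⟩
      · exact ⟨⟨r, hr, hpr.1, hpr.2.trans inf_le_left⟩, Or.inr (hpr.2.trans inf_le_right)⟩

lemma Box.mem_of_le {H : Box m} {p p' : S × C} (h : p ∈ H) (h' : p' ≤ p) : p' ∈ H := by
  obtain ⟨B, hB, -, hH⟩ := H.2
  exact (hH p').2 fun q hq => ((hH p).1 h q hq).anti h'

lemma Box.bot_left_mem (H : Box m) (z : C) : ((⊥, z) : S × C) ∈ H := by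
  obtain ⟨B, hB, -, hH⟩ := H.2
  exact (hH _).2 fun q hq => Or.inl bot_le

lemma Box.bot_right_mem (H : Box m) (s : S) : ((s, ⊥) : S × C) ∈ H := by
  obtain ⟨B, hB, -, hH⟩ := H.2
  exact (hH _).2 fun q hq => Or.inr bot_le

lemma Box.exists_eq_cl (H : Box m) : ∃ l, H = cl m l := by
  obtain ⟨B, hB, ⟨b, hb⟩, hH⟩ := H.2
  obtain ⟨l, hl⟩ := exists_rects [((⊤ : S), b)] B
  have key : ∀ p, p ∈ H ↔ (p.1 = ⊥ ∨ p.2 = ⊥ ∨ ∃ r ∈ l, p ≤ r) := by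
    intro p
    rw [← hl p]
    change p ∈ H.1 ↔ _
    rw [hH p]
    refine ⟨fun h => ⟨?_, h⟩, fun h => h.2⟩
    rcases h _ hb with h | h
    · exact Or.inl (le_bot_iff.1 h)
    · exact Or.inr (Or.inr ⟨_, List.mem_singleton.2 rfl, le_top, h⟩)
  refine ⟨l, le_antisymm ?_ ?_⟩
  · rw [Box.le_def]
    rintro ⟨s, z⟩ hp
    rcases (key _).1 hp with h | h | ⟨r, hr, h⟩
    · simp only at h; subst h; exact Box.bot_left_mem _ _
    · simp only at h; subst h; exact Box.bot_right_mem _ _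
    · exact Box.mem_of_le (mem_cl_of_mem hr) h
  · exact cl_le.2 fun p hp => (key p).2 (Or.inr (Or.inr ⟨p, hp, le_rfl⟩))

/-- A finite list of points whose closure is `H`. -/
noncomputable def Box.gens (H : Box m) : List (S × C) := H.exists_eq_cl.choose

lemma Box.cl_gens (H : Box m) : cl m H.gens = H := H.exists_eq_cl.choose_spec.symm

lemma isElt_inf (H K : Box m) : IsElt m (H.1 ∩ K.1) := by
  obtain ⟨B, hB, ⟨b, hb⟩, hH⟩ := H.2
  obtain ⟨B', hB', -, hK⟩ := K.2
  refine ⟨B ++ B', ?_, ⟨b, by simp [hb]⟩, ?_⟩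
  · intro q hq
    rcases List.mem_append.1 hq with h | h
    · exact hB q h
    · exact hB' q h
  · intro p
    simp only [Set.mem_inter_iff, hH, hK, List.mem_append, or_imp, forall_and]

noncomputable instance : Lattice (Box m) where
  sup H K := cl m (H.gens ++ K.gens)
  inf H K := ⟨H.1 ∩ K.1, isElt_inf H K⟩
  le_sup_left H K := by
    conv_lhs => rw [← H.cl_gens]
    exact cl_le.2 fun p hp => mem_cl_of_mem (List.mem_append_left _ hp)
  le_sup_right H K := by
    conv_lhs => rw [← K.cl_gens]
    exact cl_le.2 fun p hp => mem_cl_of_mem (List.mem_append_right _ hp)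
  sup_le H K M h1 h2 := by
    refine cl_le.2 fun p hp => ?_
    rcases List.mem_append.1 hp with hp | hp
    · exact h1 (by rw [← H.cl_gens]; exact mem_cl_of_mem hp)
    · exact h2 (by rw [← K.cl_gens]; exact mem_cl_of_mem hp)
  inf_le_left _ _ _ hp := hp.1
  inf_le_right _ _ _ hp := hp.2
  le_inf _ _ _ h1 h2 _ hp := ⟨h1 hp, h2 hp⟩

noncomputable instance : OrderBot (Box m) where
  bot := cl m []
  bot_le H := cl_le.2 (by simp)

lemma Box.mem_inf {H K : Box m} {p : S × C} : p ∈ H ⊓ K ↔ p ∈ H ∧ p ∈ K := Iff.rfl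

lemma cl_append (l l' : List (S × C)) : cl m (l ++ l') = cl m l ⊔ cl m l' := by
  apply le_antisymm
  · refine cl_le.2 fun p hp => ?_
    rcases List.mem_append.1 hp with hp | hp
    · exact (le_sup_left : cl m l ≤ cl m l ⊔ cl m l') (mem_cl_of_mem hp)
    · exact (le_sup_right : cl m l' ≤ cl m l ⊔ cl m l') (mem_cl_of_mem hp)
  · exact sup_le (cl_le.2 fun p hp => mem_cl_of_mem (List.mem_append_left _ hp))
      (cl_le.2 fun p hp => mem_cl_of_mem (List.mem_append_right _ hp))

/-- The least element containing the point `(s, z)`. -/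
def gen (m : Marking S C) (s : S) (z : C) : Box m := cl m [(s, z)]

lemma gen_le {s : S} {z : C} {H : Box m} : gen m s z ≤ H ↔ (s, z) ∈ H := by
  simp [gen, cl_le]

lemma cl_cons (p : S × C) (l : List (S × C)) : cl m (p :: l) = gen m p.1 p.2 ⊔ cl m l :=
  cl_append [p] l

lemma mem_gen_self (s : S) (z : C) : (s, z) ∈ gen m s z := gen_le.1 le_rfl

lemma mem_gen {s t : S} {z w : C} :
    (t, w) ∈ gen m s z ↔ (t ≤ s ∨ w ≤ m.thr s) ∧ (t = ⊥ ∨ w ≤ z) := by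
  simp [gen, mem_cl, ubT, ub, InBox, m.thr_bot]

/-- The constant `z`: all columns except that of `⊥` equal the ideal below `z`. This is the embedding
of `C` into the box lattice. -/
def D (m : Marking S C) (z : C) : Box m := gen m ⊤ z

lemma mem_D {t : S} {z w : C} : (t, w) ∈ D m z ↔ t = ⊥ ∨ w ≤ z := by
  simp [D, mem_gen]

lemma D_le {z : C} {H : Box m} : D m z ≤ H ↔ (⊤, z) ∈ H := gen_le

lemma gen_mono {s t : S} {z w : C} (h : s ≤ t) (h' : z ≤ w) : gen m s z ≤ gen m t w :=
  gen_le.2 (Box.mem_of_le (mem_gen_self t w) ⟨h, h'⟩)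

lemma gen_bot_left (z : C) : gen m ⊥ z = ⊥ := le_bot_iff.1 (gen_le.2 (Box.bot_left_mem _ _))
lemma gen_bot_right (s : S) : gen m s ⊥ = ⊥ := le_bot_iff.1 (gen_le.2 (Box.bot_right_mem _ _))
lemma D_bot : D m ⊥ = ⊥ := gen_bot_right _

lemma Box.sup_left_mem {H : Box m} {s t : S} {z : C} (h : (s, z) ∈ H) (h' : (t, z) ∈ H) :
    (s ⊔ t, z) ∈ H := by
  obtain ⟨B, hB, -, hH⟩ := H.2
  refine (hH _).2 fun q hq => ?_
  rcases (hH _).1 h q hq with h | h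
  · rcases (hH _).1 h' q hq with h' | h'
    · exact Or.inl (sup_le h h')
    · exact Or.inr h'
  · exact Or.inr h

lemma Box.sup_right_mem {H : Box m} {s : S} {z w : C} (h : (s, z) ∈ H) (h' : (s, w) ∈ H) :
    (s, z ⊔ w) ∈ H := by
  obtain ⟨B, hB, -, hH⟩ := H.2
  refine (hH _).2 fun q hq => ?_
  rcases (hH _).1 h q hq with h | h
  · exact Or.inl h
  · rcases (hH _).1 h' q hq with h' | h'
    · exact Or.inl h'
    · exact Or.inr (sup_le h h')

lemma gen_sup_left (s t : S) (z : C) : gen m s z ⊔ gen m t z = gen m (s ⊔ t) z :=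
  le_antisymm (sup_le (gen_mono le_sup_left le_rfl) (gen_mono le_sup_right le_rfl))
    (gen_le.2 (Box.sup_left_mem (gen_le.1 le_sup_left) (gen_le.1 le_sup_right)))

lemma gen_sup_right (s : S) (z w : C) : gen m s z ⊔ gen m s w = gen m s (z ⊔ w) :=
  le_antisymm (sup_le (gen_mono le_rfl le_sup_left) (gen_mono le_rfl le_sup_right))
    (gen_le.2 (Box.sup_right_mem (gen_le.1 le_sup_left) (gen_le.1 le_sup_right)))

lemma gen_inf_D (s : S) (z w : C) : gen m s z ⊓ D m w = gen m s (z ⊓ w) := by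
  apply Box.ext
  rintro ⟨t, v⟩
  rw [Box.mem_inf, mem_gen, mem_gen, mem_D, le_inf_iff]
  tauto

lemma gen_inf_gen {s t : S} (hs : m.thr s = ⊥) (ht : m.thr t = ⊥) (z : C) :
    gen m s z ⊓ gen m t z = gen m (s ⊓ t) z := by
  apply le_antisymm _ (le_inf (gen_mono inf_le_left le_rfl) (gen_mono inf_le_right le_rfl))
  rw [Box.le_def]
  rintro ⟨u, v⟩
  rw [Box.mem_inf, mem_gen, mem_gen, mem_gen, hs, ht, le_bot_iff, le_inf_iff]
  rintro ⟨⟨h1 | h1, h2⟩, h3 | h3, h4⟩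
  · exact ⟨Or.inl ⟨h1, h3⟩, h2⟩
  all_goals subst_vars; simp

lemma D_sup (z w : C) : D m z ⊔ D m w = D m (z ⊔ w) := gen_sup_right _ _ _
lemma D_inf (z w : C) : D m z ⊓ D m w = D m (z ⊓ w) := gen_inf_D _ _ _

lemma D_le_D [Nontrivial S] {z w : C} : D m z ≤ D m w ↔ z ≤ w := by
  rw [D_le, mem_D]; simp

lemma D_injective [Nontrivial S] : Function.Injective (D m) := fun z w h =>
  le_antisymm (D_le_D.1 h.le) (D_le_D.1 h.ge)

/-- Rows are principal. -/
lemma Box.exists_row (H : Box m) (z : C) : ∃ s, ∀ t, (t, z) ∈ H ↔ t ≤ s := by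
  obtain ⟨B, hB, -, hH⟩ := H.2
  have : ∀ B : List (S × C), ∃ s, ∀ t : S, (∀ q ∈ B, InBox q (t, z)) ↔ t ≤ s := by
    intro B
    induction B with
    | nil => exact ⟨⊤, by simp⟩
    | cons q B ih =>
      obtain ⟨s, hs⟩ := ih
      by_cases hz : z ≤ q.2
      · exact ⟨s, fun t => by simp only [List.forall_mem_cons, hs]; simp [InBox, hz]⟩
      · exact ⟨q.1 ⊓ s, fun t => by simp only [List.forall_mem_cons, hs]; simp [InBox, hz]⟩
  obtain ⟨s, hs⟩ := this B
  exact ⟨s, fun t => (hH _).trans (hs t)⟩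

/-- Columns over nonzero elements are principal. -/
lemma Box.exists_col (H : Box m) {s : S} (hs : s ≠ ⊥) : ∃ y, ∀ z, (s, z) ∈ H ↔ z ≤ y := by
  obtain ⟨B, hB, ⟨b, hb⟩, hH⟩ := H.2
  have : ∀ B : List (S × C), ∃ y, ∀ z : C, (z ≤ b ∧ ∀ q ∈ B, InBox q (s, z)) ↔ z ≤ y := by
    intro B
    induction B with
    | nil => exact ⟨b, by simp⟩
    | cons q B ih =>
      obtain ⟨y, hy⟩ := ih
      by_cases hz : s ≤ q.1
      · exact ⟨y, fun t => by rw [← hy, List.forall_mem_cons]; simp [InBox, hz]⟩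
      · refine ⟨q.2 ⊓ y, fun t => ?_⟩
        rw [le_inf_iff, ← hy, List.forall_mem_cons]; simp only [InBox, hz, false_or]; tauto
  obtain ⟨y, hy⟩ := this B
  refine ⟨y, fun z => (hH _).trans ((and_iff_right_of_imp fun h => ?_).symm.trans (hy z))⟩
  rcases h _ hb with h | h
  · exact absurd (le_bot_iff.1 h) hs
  · exact h

/-- Separation by allowed boxes. -/
lemma Box.exists_sep {H : Box m} {p : S × C} (h : p ∉ H) : ∃ q : S × C, m.thr q.1 ≤ q.2 ∧
    (∀ p ∈ H, InBox q p) ∧ ¬ InBox q p := by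
  obtain ⟨B, hB, -, hH⟩ := H.2
  have h' : ¬ ∀ q ∈ B, InBox q p := fun h' => h ((hH p).2 h')
  push Not at h'
  obtain ⟨q, hq, hqp⟩ := h'
  exact ⟨q, hB q hq, fun p hp => (hH p).1 hp q hq, hqp⟩

/-- Joins stay inside allowed boxes. -/
lemma Box.inBox_sup {H K : Box m} {q : S × C} (hq : m.thr q.1 ≤ q.2) (hH : ∀ p ∈ H, InBox q p)
    (hK : ∀ p ∈ K, InBox q p) : ∀ p ∈ H ⊔ K, InBox q p := by
  intro p hp
  refine inBox_of_mem_cl (l := H.gens ++ K.gens) hq ?_ hp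
  intro p hp
  rcases List.mem_append.1 hp with hp | hp
  · exact hH p (by rw [← H.cl_gens]; exact mem_cl_of_mem hp)
  · exact hK p (by rw [← K.cl_gens]; exact mem_cl_of_mem hp)

lemma inBox_of_mem_gen {s : S} {z : C} {q : S × C} (hq : m.thr q.1 ≤ q.2) (h : InBox q (s, z)) :
    ∀ p ∈ gen m s z, InBox q p := fun p hp =>
  inBox_of_mem_cl (l := [(s, z)]) hq (by simpa using h) hp

/-- The part of an allowed box lying below the constant `b`. -/
def boxElt (m : Marking S C) (q : S × C) (hq : m.thr q.1 ≤ q.2) (b : C) : Box m :=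
  ⟨{p | InBox q p ∧ InBox (⊥, b) p}, [q, (⊥, b)], by simp [hq, m.thr_bot], ⟨b, by simp⟩,
    fun p => by simp⟩

end Box
end StrongInd

/-! ### Congruences of the box lattice -/

namespace StrongInd

section Con
variable {L : Type*} [Lattice L] {θ : L → L → Prop}

lemma con_refl (h : LatCon L θ) (a : L) : θ a a := h.1.refl a
lemma con_symm (h : LatCon L θ) {a b : L} (hab : θ a b) : θ b a := h.1.symm hab
lemma con_trans (h : LatCon L θ) {a b c : L} (hab : θ a b) (hbc : θ b c) : θ a c :=
  h.1.trans hab hbc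
lemma con_sup (h : LatCon L θ) {a b c d : L} (hab : θ a b) (hcd : θ c d) :
    θ (a ⊔ c) (b ⊔ d) := (h.2 a b c d hab hcd).1
lemma con_inf (h : LatCon L θ) {a b c d : L} (hab : θ a b) (hcd : θ c d) :
    θ (a ⊓ c) (b ⊓ d) := (h.2 a b c d hab hcd).2

/-- Congruence classes are convex. -/
lemma con_convex (h : LatCon L θ) {a b c : L} (hab : a ≤ b) (hbc : b ≤ c) (hac : θ a c) :
    θ b c := by
  have := con_sup h hac (con_refl h b)
  rwa [sup_eq_right.2 hab, sup_eq_left.2 hbc] at this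

end Con

section BoxCon

variable {S C : Type*} [Lattice S] [BoundedOrder S] [Lattice C] [OrderBot C] {m : Marking S C}
variable {θ : C → C → Prop}

/-- `H` lies below `K` modulo `θ`: every point of `H` can be lowered within its `θ`-class to a
point of `K` in the same column. -/
def BLe (θ : C → C → Prop) (H K : Box m) : Prop :=
  ∀ s z, (s, z) ∈ H → ∃ z' ≤ z, θ z z' ∧ (s, z') ∈ K

/-- The extension of the congruence `θ` of `C` to `Box m`. -/
def BCon (θ : C → C → Prop) (H K : Box m) : Prop := BLe θ H K ∧ BLe θ K H

lemma BLe.of_le (hθ : LatCon C θ) {H K : Box m} (h : H ≤ K) : BLe θ H K :=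
  fun s z hz => ⟨z, le_rfl, con_refl hθ z, h hz⟩

lemma BLe.trans (hθ : LatCon C θ) {H K M : Box m} (h : BLe θ H K) (h' : BLe θ K M) :
    BLe θ H M := by
  intro s z hz
  obtain ⟨z1, h1, h2, h3⟩ := h s z hz
  obtain ⟨z2, h4, h5, h6⟩ := h' s z1 h3
  exact ⟨z2, h4.trans h1, con_trans hθ h2 h5, h6⟩

lemma BLe.inf (hθ : LatCon C θ) {H K H' K' : Box m} (h : BLe θ H H') (h' : BLe θ K K') :
    BLe θ (H ⊓ K) (H' ⊓ K') := by
  rintro s z ⟨hz, hz'⟩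
  obtain ⟨z1, h1, h2, h3⟩ := h s z hz
  obtain ⟨z2, h4, h5, h6⟩ := h' s z hz'
  refine ⟨z1 ⊓ z2, inf_le_left.trans h1, ?_, Box.mem_of_le h3 ⟨le_rfl, inf_le_left⟩,
    Box.mem_of_le h6 ⟨le_rfl, inf_le_right⟩⟩
  simpa using con_inf hθ h2 h5

/-- Boxes with the same corner in `S` and `θ`-related corners in `C`. -/
def BRel (θ : C → C → Prop) (q q' : S × C) : Prop := q.1 = q'.1 ∧ θ q.2 q'.2

lemma exists_of_forall₂ (hθ : LatCon C θ) {B B' : List (S × C)} (h : List.Forall₂ (BRel θ) B B')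
    {s : S} {z : C} (hz : ∀ q ∈ B, InBox q (s, z)) :
    ∃ z' ≤ z, θ z z' ∧ ∀ q ∈ B', InBox q (s, z') := by
  induction h with
  | nil => exact ⟨z, le_rfl, con_refl hθ z, by simp⟩
  | @cons q q' B B' hq hB ih =>
    obtain ⟨z0, h0, h1, h2⟩ := ih fun q hq => hz q (List.mem_cons_of_mem _ hq)
    rcases hz q List.mem_cons_self with h | h
    · refine ⟨z0, h0, h1, ?_⟩
      intro r hr
      rcases List.mem_cons.1 hr with rfl | hr
      · exact Or.inl (hq.1 ▸ h)
      · exact h2 r hr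
    · refine ⟨z0 ⊓ q'.2, inf_le_left.trans h0, ?_, ?_⟩
      · have := con_inf hθ h1 hq.2
        rwa [inf_eq_left.2 h] at this
      · intro r hr
        rcases List.mem_cons.1 hr with rfl | hr
        · exact Or.inr inf_le_right
        · exact (h2 r hr).anti ⟨le_rfl, inf_le_left⟩

lemma forall₂_ub (hθ : LatCon C θ) {l l' : List (S × C)} (h : List.Forall₂ (BRel θ) l l') :
    List.Forall₂ (BRel θ) (ub l) (ub l') := by
  induction h with
  | nil => exact List.Forall₂.cons ⟨rfl, con_refl hθ _⟩ List.Forall₂.nil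
  | @cons p p' l l' hp hl ih =>
    simp only [ub]
    generalize ub l = B at ih
    generalize ub l' = B' at ih
    induction ih with
    | nil => simp
    | @cons q q' B B' hq hB ih2 =>
      simp only [List.flatMap_cons, List.cons_append, List.nil_append]
      exact .cons ⟨by rw [hq.1, hp.1], hq.2⟩ (.cons ⟨hq.1, con_sup hθ hq.2 hp.2⟩ ih2)

lemma forall₂_ubT (hθ : LatCon C θ) {l l' : List (S × C)} (h : List.Forall₂ (BRel θ) l l') :
    List.Forall₂ (BRel θ) (ubT m l) (ubT m l') := by
  rw [ubT, ubT, List.forall₂_map_left_iff, List.forall₂_map_right_iff]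
  exact (forall₂_ub hθ h).imp fun q q' hq => ⟨hq.1, by
    show θ (q.2 ⊔ m.thr q.1) (q'.2 ⊔ m.thr q'.1)
    rw [← hq.1]
    exact con_sup hθ hq.2 (con_refl hθ _)⟩

lemma BLe.cl (hθ : LatCon C θ) {l : List (S × C)} {M : Box m}
    (h : ∀ p ∈ l, ∃ z' ≤ p.2, θ p.2 z' ∧ (p.1, z') ∈ M) : BLe θ (cl m l) M := by
  have : ∃ l', List.Forall₂ (BRel θ) l l' ∧ ∀ p ∈ l', p ∈ M := by
    induction l with
    | nil => exact ⟨[], .nil, by simp⟩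
    | cons p l ih =>
      obtain ⟨l', h1, h2⟩ := ih fun p hp => h p (List.mem_cons_of_mem _ hp)
      obtain ⟨z', -, h3, h4⟩ := h p List.mem_cons_self
      refine ⟨(p.1, z') :: l', .cons ⟨rfl, h3⟩ h1, ?_⟩
      intro r hr
      rcases List.mem_cons.1 hr with rfl | hr
      · exact h4
      · exact h2 r hr
  obtain ⟨l', h1, h2⟩ := this
  intro s z hz
  obtain ⟨z', h3, h4, h5⟩ := exists_of_forall₂ hθ (forall₂_ubT (m := m) hθ h1) (mem_cl.1 hz)
  exact ⟨z', h3, h4, cl_le.2 h2 (mem_cl.2 h5)⟩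

lemma BLe.sup (hθ : LatCon C θ) {H K M : Box m} (h : BLe θ H M) (h' : BLe θ K M) :
    BLe θ (H ⊔ K) M := by
  refine BLe.cl (l := H.gens ++ K.gens) hθ fun p hp => ?_
  rcases List.mem_append.1 hp with hp | hp
  · exact h p.1 p.2 (by rw [← H.cl_gens]; exact mem_cl_of_mem hp)
  · exact h' p.1 p.2 (by rw [← K.cl_gens]; exact mem_cl_of_mem hp)

lemma latCon_BCon (hθ : LatCon C θ) : LatCon (Box m) (BCon θ) := by
  refine ⟨⟨fun H => ⟨.of_le hθ le_rfl, .of_le hθ le_rfl⟩, fun h => ⟨h.2, h.1⟩,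
    fun h h' => ⟨h.1.trans hθ h'.1, h'.2.trans hθ h.2⟩⟩, ?_⟩
  intro a b c d h h'
  exact ⟨⟨.sup hθ (h.1.trans hθ (.of_le hθ le_sup_left)) (h'.1.trans hθ (.of_le hθ le_sup_right)),
    .sup hθ (h.2.trans hθ (.of_le hθ le_sup_left)) (h'.2.trans hθ (.of_le hθ le_sup_right))⟩,
    ⟨.inf hθ h.1 h'.1, .inf hθ h.2 h'.2⟩⟩

lemma BCon_D [Nontrivial S] (hθ : LatCon C θ) {y y' : C} :
    BCon θ (D m y) (D m y') ↔ θ y y' := by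
  constructor
  · rintro ⟨h, h'⟩
    obtain ⟨z, -, h1, h2⟩ := h ⊤ y (mem_D.2 (Or.inr le_rfl))
    obtain ⟨w, -, h3, h4⟩ := h' ⊤ y' (mem_D.2 (Or.inr le_rfl))
    simp only [mem_D, top_ne_bot, false_or] at h2 h4
    have h5 := con_sup hθ h1 (con_refl hθ y')
    have h6 := con_sup hθ (con_refl hθ y) h3
    rw [sup_eq_right.2 h2] at h5
    rw [sup_eq_left.2 h4] at h6
    exact con_trans hθ (con_symm hθ h6) h5
  · intro h
    have key : ∀ {y y'}, θ y y' → BLe θ (D m y) (D m y') := by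
      intro y y' h s z hz
      rcases mem_D.1 hz with rfl | hz
      · exact ⟨z, le_rfl, con_refl hθ z, Box.bot_left_mem _ _⟩
      · refine ⟨z ⊓ y', inf_le_left, ?_, mem_D.2 (Or.inr inf_le_right)⟩
        simpa [inf_eq_left.2 hz] using con_inf hθ (con_refl hθ z) h
    exact ⟨key h, key (con_symm hθ h)⟩

variable {Ψ : Box m → Box m → Prop}

lemma con_of_BLe (hΨ : LatCon (Box m) Ψ) (hD : ∀ y y', Ψ (D m y) (D m y') ↔ θ y y')
    {H K : Box m} (h : BLe θ H K) : Ψ (H ⊔ K) K := by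
  have : ∀ l : List (S × C), (∀ p ∈ l, p ∈ H) → Ψ (cl m l ⊔ K) K := by
    intro l hl
    induction l with
    | nil =>
      have : cl m [] ⊔ K = K := sup_eq_right.2 (cl_le.2 (by simp))
      rw [this]; exact con_refl hΨ _
    | cons p l ih =>
      have ih := ih fun p hp => hl p (List.mem_cons_of_mem _ hp)
      obtain ⟨z', h1, h2, h3⟩ := h p.1 p.2 (hl p List.mem_cons_self)
      have h4 := con_inf hΨ (con_refl hΨ (gen m p.1 p.2)) ((hD _ _).2 h2)
      rw [gen_inf_D, gen_inf_D, inf_idem, inf_eq_right.2 h1] at h4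
      have h5 := con_sup hΨ h4 ih
      rwa [sup_eq_right.2 (gen_le.2 h3), ← sup_assoc, ← cl_cons] at h5
  have h1 := this H.gens fun p hp => by rw [← H.cl_gens]; exact mem_cl_of_mem hp
  rwa [H.cl_gens] at h1

/-- Every `s ≰ α` is witnessed by an element below `s` of threshold `⊥`, or can be joined to `⊤`
with a proper element `c` above `α` of threshold `⊥`. -/
def SepHyp (m : Marking S C) : Prop := ∀ s α, ¬ s ≤ α →
  (∃ p ≤ s, m.thr p = ⊥ ∧ ¬ p ≤ α) ∨ (∃ c, m.thr c = ⊥ ∧ α ≤ c ∧ c ≠ ⊤ ∧ s ⊔ c = ⊤)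

/-- A strong form of simplicity of `S`: an equivalence relation compatible with joins, and
compatible with meets at least inside a set `P` containing all elements of threshold `⊥`,
identifies `⊥` and `⊤` as soon as it identifies two comparable distinct elements of `P`. -/
def SimpleHyp (m : Marking S C) : Prop := ∀ (r : S → S → Prop) (P : S → Prop), Equivalence r →
  (∀ u, m.thr u = ⊥ → P u) → (∀ u v w, r u v → r (u ⊔ w) (v ⊔ w)) →
  (∀ u v w, P u → P v → P w → r u v → r (u ⊓ w) (v ⊓ w)) →
  ∀ u v, u < v → P u → P v → r u v → r ⊥ ⊤

lemma mem_gen_sup_D {u t : S} {b c w : C} (hc : c ≤ b) (hP : b ⊓ (c ⊔ m.thr u) ≤ c)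
    (h : (t, w) ∈ gen m u b ⊔ D m c) : t = ⊥ ∨ (w ≤ b ∧ (t ≤ u ∨ w ≤ c)) := by
  have h0 : m.thr ⊥ ≤ b := by simp [m.thr_bot]
  have h1 : InBox (⊥, b) (t, w) := Box.inBox_sup (H := gen m u b) (K := D m c) (q := (⊥, b)) h0
    (inBox_of_mem_gen h0 (Or.inr le_rfl)) (inBox_of_mem_gen h0 (Or.inr hc)) _ h
  have h2 : InBox (u, c ⊔ m.thr u) (t, w) :=
    Box.inBox_sup (H := gen m u b) (K := D m c) (q := (u, c ⊔ m.thr u)) le_sup_right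
    (inBox_of_mem_gen le_sup_right (Or.inl le_rfl))
    (inBox_of_mem_gen le_sup_right (Or.inr le_sup_left)) _ h
  rcases h1 with h1 | h1
  · exact Or.inl (le_bot_iff.1 h1)
  · rcases h2 with h2 | h2
    · exact Or.inr ⟨h1, Or.inl h2⟩
    · exact Or.inr ⟨h1, Or.inr ((le_inf h1 h2).trans hP)⟩

lemma mem_gen_sup_D_of {u t : S} {b c w : C}
    (h : t = ⊥ ∨ (w ≤ b ∧ (t ≤ u ∨ w ≤ c))) : (t, w) ∈ gen m u b ⊔ D m c := by
  rcases h with rfl | ⟨h1, h2 | h2⟩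
  · exact Box.bot_left_mem _ _
  · exact (le_sup_left : gen m u b ≤ gen m u b ⊔ D m c)
      (Box.mem_of_le (mem_gen_self u b) ⟨h2, h1⟩)
  · exact (le_sup_right : D m c ≤ gen m u b ⊔ D m c) (mem_D.2 (Or.inr h2))

/-- The local step for uniqueness: a box containing `K` but not the point `(s, b)` of `H` forces
`θ b (b ⊓ β)`. -/
lemma con_inf_of_sep (h1 : SepHyp m) (h2 : SimpleHyp m) (hΨ : LatCon (Box m) Ψ)
    (hD : ∀ y y', Ψ (D m y) (D m y') ↔ θ y y') {H K : Box m} (hHK : Ψ H K) {s : S} {b : C}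
    (hb : (s, b) ∈ H) {q : S × C} (hq : m.thr q.1 ≤ q.2) (hK : ∀ p ∈ K, InBox q p)
    (hs : ¬ s ≤ q.1) : θ b (b ⊓ q.2) := by
  obtain ⟨α, β⟩ := q
  simp only at hq hs ⊢
  set c := b ⊓ β with hc
  have hcb : c ≤ b := inf_le_left
  have fin : Ψ (gen m ⊥ b ⊔ D m c) (gen m ⊤ b ⊔ D m c) → θ b c := by
    intro h
    rw [gen_bot_left, bot_sup_eq] at h
    have : gen m ⊤ b ⊔ D m c = D m b := sup_eq_left.2 (gen_mono le_rfl hcb)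
    rw [this] at h
    exact (hD _ _).1 (con_symm hΨ h)
  have simp' := h2 (fun u v => Ψ (gen m u b ⊔ D m c) (gen m v b ⊔ D m c))
    (fun u => b ⊓ (c ⊔ m.thr u) ≤ c)
    ⟨fun u => con_refl hΨ _, con_symm hΨ, con_trans hΨ⟩
    (fun u hu => by rw [hu, sup_bot_eq]; exact inf_le_right)
    (fun u v w h => by
      have := con_sup hΨ h (con_refl hΨ (gen m w b))
      rwa [sup_right_comm, gen_sup_left, sup_right_comm, gen_sup_left] at this)
    (fun u v w hu hv hw h => by
      have key : ∀ u v : S, b ⊓ (c ⊔ m.thr u) ≤ c → b ⊓ (c ⊔ m.thr v) ≤ c →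
          (gen m u b ⊔ D m c) ⊓ (gen m v b ⊔ D m c) = gen m (u ⊓ v) b ⊔ D m c := by
        intro u v hu hv
        apply le_antisymm
        · rw [Box.le_def]
          rintro ⟨t, w⟩ ⟨h, h'⟩
          have h := mem_gen_sup_D hcb hu h
          have h' := mem_gen_sup_D hcb hv h'
          apply mem_gen_sup_D_of
          rw [le_inf_iff]; tauto
        · exact le_inf (sup_le_sup_right (gen_mono inf_le_left le_rfl) _)
            (sup_le_sup_right (gen_mono inf_le_right le_rfl) _)
      have := con_inf hΨ h (con_refl hΨ (gen m w b ⊔ D m c))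
      rwa [key u w hu hw, key v w hv hw] at this)
  have hZ : ∀ p ≤ s, Ψ (gen m p b ⊓ K) (gen m p b) := by
    intro p hp
    have := con_inf hΨ (con_refl hΨ (gen m p b)) hHK
    rw [inf_eq_left.2 (gen_le.2 (Box.mem_of_le hb ⟨hp, le_rfl⟩))] at this
    exact con_symm hΨ this
  have hP0 : ∀ u, m.thr u = ⊥ → b ⊓ (c ⊔ m.thr u) ≤ c := fun u hu => by
    rw [hu, sup_bot_eq]; exact inf_le_right
  rcases h1 s α hs with ⟨p, hps, hp0, hpα⟩ | ⟨d, hd0, hαd, hdt, hsd⟩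
  · have hlt : p ⊓ α < p := lt_of_le_of_ne inf_le_left fun h => hpα (inf_eq_left.1 h)
    refine fin (simp' (p ⊓ α) p hlt ?_ (hP0 p hp0) ?_)
    · by_cases h : m.thr (p ⊓ α) = ⊥
      · exact hP0 _ h
      · have hpt := m.eq_top _ _ hlt h
        rw [hpt, top_inf_eq]
        exact inf_le_inf_left b (sup_le inf_le_right hq)
    · have h3 := con_sup hΨ (hZ p hps) (con_refl hΨ (D m c))
      refine con_convex hΨ ?_ (sup_le_sup_right (gen_mono inf_le_left le_rfl) _) h3
      refine sup_le ?_ le_sup_right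
      rw [Box.le_def]
      rintro ⟨t, w⟩ ⟨h, h'⟩
      have h := mem_gen.1 h
      have h' := hK _ h'
      apply mem_gen_sup_D_of
      simp only [InBox] at h'
      rw [hp0, le_bot_iff] at h
      rw [le_inf_iff, hc, le_inf_iff]
      rcases h with ⟨h | rfl, h''⟩
      · tauto
      · simp
  · refine fin (simp' d ⊤ (lt_top_iff_ne_top.2 hdt) (hP0 d hd0) (hP0 ⊤ m.thr_top) ?_)
    have h3 := con_sup hΨ (con_sup hΨ (hZ s le_rfl) (con_refl hΨ (gen m d b)))
      (con_refl hΨ (D m c))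
    rw [gen_sup_left, hsd] at h3
    refine con_convex hΨ ?_ (sup_le_sup_right (gen_mono le_top le_rfl) _) h3
    refine sup_le (sup_le ?_ le_sup_left) le_sup_right
    rw [Box.le_def]
    rintro ⟨t, w⟩ ⟨h, h'⟩
    have h := (mem_gen.1 h).2
    have h' := hK _ h'
    apply mem_gen_sup_D_of
    simp only [InBox] at h'
    rw [hc, le_inf_iff]
    rcases h' with h' | h'
    · have := h'.trans hαd; tauto
    · tauto

lemma BLe_of_con (h1 : SepHyp m) (h2 : SimpleHyp m) (hθ : LatCon C θ) (hΨ : LatCon (Box m) Ψ)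
    (hD : ∀ y y', Ψ (D m y) (D m y') ↔ θ y y') {H K : Box m} (hHK : Ψ H K) : BLe θ H K := by
  intro s b hb
  obtain ⟨B, hB, -, hK⟩ := K.2
  have key : ∀ q ∈ B, s ≤ q.1 ∨ θ b (b ⊓ q.2) := fun q hq => by
    by_cases hs : s ≤ q.1
    · exact Or.inl hs
    · exact Or.inr (con_inf_of_sep h1 h2 hΨ hD hHK hb (hB q hq) (fun p hp => (hK p).1 hp q hq) hs)
  have : ∃ z' ≤ b, θ b z' ∧ ∀ q ∈ B, InBox q (s, z') := by
    clear hK hB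
    induction B with
    | nil => exact ⟨b, le_rfl, con_refl hθ b, by simp⟩
    | cons q B ih =>
      obtain ⟨z, hz, hz', hz''⟩ := ih fun q hq => key q (List.mem_cons_of_mem _ hq)
      rcases key q List.mem_cons_self with h | h
      · refine ⟨z, hz, hz', ?_⟩
        intro r hr
        rcases List.mem_cons.1 hr with rfl | hr
        · exact Or.inl h
        · exact hz'' r hr
      · refine ⟨z ⊓ q.2, inf_le_left.trans hz, ?_, ?_⟩
        · have := con_inf hθ hz' h
          rwa [inf_idem, ← inf_assoc, inf_eq_left.2 hz] at this
        · intro r hr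
          rcases List.mem_cons.1 hr with rfl | hr
          · exact Or.inr inf_le_right
          · exact (hz'' r hr).anti ⟨le_rfl, inf_le_left⟩
  obtain ⟨z', h3, h4, h5⟩ := this
  exact ⟨z', h3, h4, (hK _).2 h5⟩

lemma con_iff_BCon (h1 : SepHyp m) (h2 : SimpleHyp m) (hθ : LatCon C θ)
    (hΨ : LatCon (Box m) Ψ) (hD : ∀ y y', Ψ (D m y) (D m y') ↔ θ y y') {H K : Box m} :
    Ψ H K ↔ BCon θ H K :=
  ⟨fun h => ⟨BLe_of_con h1 h2 hθ hΨ hD h, BLe_of_con h1 h2 hθ hΨ hD (con_symm hΨ h)⟩,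
    fun h => con_trans hΨ (con_symm hΨ (by rw [sup_comm]; exact con_of_BLe hΨ hD h.2))
      (con_of_BLe hΨ hD h.1)⟩

lemma cpEmb_D [Nontrivial S] (h1 : SepHyp m) (h2 : SimpleHyp m) : CPEmb C (Box m) (D m) := by
  refine ⟨D_injective, fun x y => (D_sup x y).symm, fun x y => (D_inf x y).symm, ?_⟩
  intro θ hθ
  refine ⟨BCon θ, ⟨latCon_BCon hθ, fun x y => BCon_D hθ⟩, ?_⟩
  rintro Ψ ⟨hΨ, hD⟩
  funext H K
  exact propext (con_iff_BCon h1 h2 hθ hΨ hD)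

end BoxCon

lemma CPEmb.comp {A B C : Type*} [Lattice A] [Lattice B] [Lattice C] {g : B → C} {f : A → B}
    (hg : CPEmb B C g) (hf : CPEmb A B f) : CPEmb A C (g ∘ f) := by
  obtain ⟨g1, g2, g3, g4⟩ := hg
  obtain ⟨f1, f2, f3, f4⟩ := hf
  refine ⟨g1.comp f1, by simp [f2, g2], by simp [f3, g3], ?_⟩
  intro θ hθ
  obtain ⟨Θ, ⟨h1, h2⟩, h3⟩ := f4 θ hθ
  obtain ⟨Φ, ⟨h4, h5⟩, h6⟩ := g4 Θ h1
  refine ⟨Φ, ⟨h4, fun x y => by simp [h5, h2]⟩, ?_⟩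
  rintro Ψ ⟨h7, h8⟩
  apply h6 _ ⟨h7, ?_⟩
  have : (fun x y => Ψ (g x) (g y)) = Θ := by
    apply h3
    refine ⟨⟨⟨fun a => con_refl h7 _, con_symm h7, con_trans h7⟩, ?_⟩, h8⟩
    intro a b c d hab hcd
    simp only [g2, g3]
    exact h7.2 _ _ _ _ hab hcd
  intro x y
  rw [← this]

end StrongInd

/-! ### The frame -/

namespace StrongInd

section Skeleton

/-- The skeleton: a copy `a x` of `A`, further atoms `p j` and a chain of elements `c k`, indexed by
`J` with a bottom added, that lie above all of `A`; the elements below `c k` include `p j` exactly for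
`j ≤ k`. -/
inductive Skel (A J : Type*) : Type _
  | a (x : A) : Skel A J
  | p (j : J) : Skel A J
  | c (k : WithBot J) : Skel A J

variable {A J : Type*} [Lattice A] [OrderBot A] [LinearOrder J]

namespace Skel

def le : Skel A J → Skel A J → Prop
  | a x, a y => x ≤ y
  | a x, p _ => x = ⊥
  | a _, c _ => True
  | p _, a _ => False
  | p i, p j => i = j
  | p j, c k => (j : WithBot J) ≤ k
  | c _, a _ => False
  | c _, p _ => False
  | c k, c l => k ≤ l

instance : LE (Skel A J) := ⟨le⟩

@[simp] lemma a_le_a {x y : A} : (a x : Skel A J) ≤ a y ↔ x ≤ y := Iff.rfl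
@[simp] lemma a_le_p {x : A} {j : J} : a x ≤ p j ↔ x = ⊥ := Iff.rfl
@[simp] lemma a_le_c (x : A) (k : WithBot J) : a x ≤ c k := trivial
@[simp] lemma p_le_a {x : A} {j : J} : ¬ p j ≤ a x := id
@[simp] lemma p_le_p {i j : J} : (p i : Skel A J) ≤ p j ↔ i = j := Iff.rfl
@[simp] lemma p_le_c {j : J} {k : WithBot J} : (p j : Skel A J) ≤ c k ↔ (j : WithBot J) ≤ k :=
  Iff.rfl
@[simp] lemma c_le_a {x : A} {k : WithBot J} : ¬ c k ≤ a x := id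
@[simp] lemma c_le_p {j : J} {k : WithBot J} : ¬ (c k : Skel A J) ≤ p j := id
@[simp] lemma c_le_c {k l : WithBot J} : (c k : Skel A J) ≤ c l ↔ k ≤ l := Iff.rfl

instance : PartialOrder (Skel A J) where
  le_refl u := by cases u <;> simp
  le_trans u v w := by
    rcases u with x | i | k <;> rcases v with y | j | l <;> rcases w with z | n | o <;> simp
    · exact le_trans
    · rintro h rfl; exact le_bot_iff.1 h
    · rintro rfl; simp
    · rintro rfl; simp
    · rintro rfl; simp
    · exact le_trans
    · exact le_trans
  le_antisymm u v := by
    rcases u with x | i | k <;> rcases v with y | j | l <;> simp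
    · exact le_antisymm
    · tauto
    · exact le_antisymm

open Classical in
noncomputable def sup : Skel A J → Skel A J → Skel A J
  | a x, a y => a (x ⊔ y)
  | a x, p j => if x = ⊥ then p j else c j
  | a _, c k => c k
  | p j, a x => if x = ⊥ then p j else c j
  | p i, p j => if i = j then p i else c (i ⊔ j : J)
  | p j, c k => c (j ⊔ k)
  | c k, a _ => c k
  | c k, p j => c (j ⊔ k)
  | c k, c l => c (k ⊔ l)

open Classical in
noncomputable def inf : Skel A J → Skel A J → Skel A J
  | a x, a y => a (x ⊓ y)
  | a _, p _ => a ⊥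
  | a x, c _ => a x
  | p _, a _ => a ⊥
  | p i, p j => if i = j then p i else a ⊥
  | p j, c k => if (j : WithBot J) ≤ k then p j else a ⊥
  | c _, a x => a x
  | c k, p j => if (j : WithBot J) ≤ k then p j else a ⊥
  | c k, c l => c (k ⊓ l)

noncomputable instance : Lattice (Skel A J) where
  sup := sup
  inf := inf
  le_sup_left u v := by
    rcases u with x | i | k <;> rcases v with y | j | l <;> simp [sup] <;> split_ifs <;> simp_all
  le_sup_right u v := by
    rcases u with x | i | k <;> rcases v with y | j | l <;> simp [sup] <;> split_ifs <;> simp_all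
  sup_le u v w := by
    rcases u with x | i | k <;> rcases v with y | j | l <;> rcases w with z | n | o <;>
      simp [sup] <;> intros <;> (try split_ifs) <;> simp_all [sup_le_iff]
  inf_le_left u v := by
    rcases u with x | i | k <;> rcases v with y | j | l <;> simp [inf] <;> split_ifs <;> simp_all
  inf_le_right u v := by
    rcases u with x | i | k <;> rcases v with y | j | l <;> simp [inf] <;> split_ifs <;> simp_all
  le_inf u v w := by
    rcases u with x | i | k <;> rcases v with y | j | l <;> rcases w with z | n | o <;>
      simp [inf] <;> intros <;> (try split_ifs) <;> simp_all

instance : OrderBot (Skel A J) where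
  bot := a ⊥
  bot_le u := by cases u <;> simp

lemma bot_eq : (⊥ : Skel A J) = a ⊥ := rfl

lemma c_inf_p {k : WithBot J} {j : J} (h : k < j) : (c k ⊓ p j : Skel A J) = ⊥ :=
  if_neg (not_le.2 h)

end Skel
end Skeleton

section Capped

/-- The lattice `Λ` with a new top element and, for each `l` with `Q l`, a coatom `cap l` whose
only lower bounds besides itself are the elements of `Λ` below `l`. -/
inductive Capped {Λ : Type*} (Q : Λ → Prop) : Type _
  | base (l : Λ) : Capped Q
  | cap (l : Λ) (h : Q l) : Capped Q
  | top : Capped Q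

variable {Λ : Type*} [Lattice Λ] [OrderBot Λ] {Q : Λ → Prop}

namespace Capped

def le : Capped Q → Capped Q → Prop
  | _, top => True
  | base l, base l' => l ≤ l'
  | base l, cap l' _ => l ≤ l'
  | cap _ _, base _ => False
  | cap l _, cap l' _ => l = l'
  | top, base _ => False
  | top, cap _ _ => False

instance : LE (Capped Q) := ⟨le⟩

@[simp] lemma le_top' (u : Capped Q) : u ≤ top := by cases u <;> trivial
@[simp] lemma base_le_base {l l' : Λ} : (base l : Capped Q) ≤ base l' ↔ l ≤ l' := Iff.rfl
@[simp] lemma base_le_cap {l l' : Λ} {h : Q l'} : base l ≤ cap l' h ↔ l ≤ l' := Iff.rfl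
@[simp] lemma cap_le_base {l l' : Λ} {h : Q l} : ¬ cap l h ≤ base l' := id
@[simp] lemma cap_le_cap {l l' : Λ} {h : Q l} {h' : Q l'} : cap l h ≤ cap l' h' ↔ l = l' :=
  Iff.rfl
@[simp] lemma top_le_base {l : Λ} : ¬ (top : Capped Q) ≤ base l := id
@[simp] lemma top_le_cap {l : Λ} {h : Q l} : ¬ top ≤ cap l h := id

instance : PartialOrder (Capped Q) where
  le_refl u := by cases u <;> simp
  le_trans u v w := by
    rcases u with l | ⟨l, h⟩ | _ <;> rcases v with l' | ⟨l', h'⟩ | _ <;>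
      rcases w with l'' | ⟨l'', h''⟩ | _ <;> simp
    · exact le_trans
    · exact le_trans
    · rintro h rfl; exact h
    · rintro rfl; simp
  le_antisymm u v := by
    rcases u with l | ⟨l, h⟩ | _ <;> rcases v with l' | ⟨l', h'⟩ | _ <;> simp
    · exact le_antisymm
    · tauto

open Classical in
noncomputable def sup : Capped Q → Capped Q → Capped Q
  | top, _ => top
  | base _, top => top
  | cap _ _, top => top
  | base l, base l' => base (l ⊔ l')
  | base l, cap l' h => if l ≤ l' then cap l' h else top
  | cap l h, base l' => if l' ≤ l then cap l h else top
  | cap l h, cap l' _ => if l = l' then cap l h else top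

open Classical in
noncomputable def inf : Capped Q → Capped Q → Capped Q
  | top, u => u
  | base l, top => base l
  | cap l h, top => cap l h
  | base l, base l' => base (l ⊓ l')
  | base l, cap l' _ => base (l ⊓ l')
  | cap l _, base l' => base (l ⊓ l')
  | cap l h, cap l' _ => if l = l' then cap l h else base (l ⊓ l')

noncomputable instance : Lattice (Capped Q) where
  sup := sup
  inf := inf
  le_sup_left u v := by
    rcases u with l | ⟨l, h⟩ | _ <;> rcases v with l' | ⟨l', h'⟩ | _ <;> simp [sup] <;>
      split_ifs <;> simp_all
  le_sup_right u v := by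
    rcases u with l | ⟨l, h⟩ | _ <;> rcases v with l' | ⟨l', h'⟩ | _ <;> simp [sup] <;>
      split_ifs <;> simp_all
  sup_le u v w := by
    rcases u with l | ⟨l, h⟩ | _ <;> rcases v with l' | ⟨l', h'⟩ | _ <;>
      rcases w with l'' | ⟨l'', h''⟩ | _ <;>
      simp [sup] <;> intros <;> (try split_ifs) <;> simp_all
  inf_le_left u v := by
    rcases u with l | ⟨l, h⟩ | _ <;> rcases v with l' | ⟨l', h'⟩ | _ <;> simp [inf] <;>
      split_ifs <;> simp_all
  inf_le_right u v := by
    rcases u with l | ⟨l, h⟩ | _ <;> rcases v with l' | ⟨l', h'⟩ | _ <;> simp [inf] <;>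
      split_ifs <;> simp_all
  le_inf u v w := by
    rcases u with l | ⟨l, h⟩ | _ <;> rcases v with l' | ⟨l', h'⟩ | _ <;>
      rcases w with l'' | ⟨l'', h''⟩ | _ <;>
      simp [inf] <;> intros <;> (try split_ifs) <;> simp_all

instance : BoundedOrder (Capped Q) where
  top := top
  le_top := le_top'
  bot := base ⊥
  bot_le u := by cases u <;> simp

instance : Nontrivial (Capped Q) := ⟨⊥, ⊤, by rintro ⟨⟩⟩

lemma top_eq : (⊤ : Capped Q) = top := rfl
lemma bot_eq : (⊥ : Capped Q) = base ⊥ := rfl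
lemma base_sup_base (l l' : Λ) : (base l ⊔ base l' : Capped Q) = base (l ⊔ l') := rfl
lemma base_inf_base (l l' : Λ) : (base l ⊓ base l' : Capped Q) = base (l ⊓ l') := rfl
lemma base_inf_cap (l l' : Λ) (h : Q l') : base l ⊓ cap l' h = base (l ⊓ l') := rfl
lemma cap_inf_base (l l' : Λ) (h : Q l) : cap l h ⊓ base l' = base (l ⊓ l') := rfl
lemma base_ne_top (l : Λ) : (base l : Capped Q) ≠ ⊤ := by rintro ⟨⟩
lemma cap_ne_top (l : Λ) (h : Q l) : cap l h ≠ ⊤ := by rintro ⟨⟩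

lemma cap_inf_cap {l l' : Λ} (h : Q l) (h' : Q l') (hne : l ≠ l') :
    cap l h ⊓ cap l' h' = base (l ⊓ l') := if_neg hne

lemma cap_sup_base {l l' : Λ} (h : Q l) (hl : ¬ l' ≤ l) : cap l h ⊔ base l' = ⊤ := if_neg hl

lemma cap_sup_cap {l l' : Λ} (h : Q l) (h' : Q l') (hne : l ≠ l') :
    cap l h ⊔ cap l' h' = ⊤ := if_neg hne

lemma eq_top_of_cap_lt {l : Λ} {h : Q l} {v : Capped Q} (hv : cap l h < v) : v = ⊤ := by
  rcases v with l' | ⟨l', h'⟩ | _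
  · exact absurd hv.le cap_le_base
  · have := cap_le_cap.1 hv.le
    subst this
    exact absurd hv (lt_irrefl _)
  · rfl

end Capped
end Capped

section Frame

variable {A J : Type*} [Lattice A] [OrderBot A] [LinearOrder J]

/-- The elements of the skeleton that receive a coatom: all except the chain elements `c k`. -/
def HasCap (l : Skel A J) : Prop := ∀ k, l ≠ Skel.c k

lemma hasCap_a (x : A) : HasCap (Skel.a x : Skel A J) := by rintro k ⟨⟩
lemma hasCap_p (j : J) : HasCap (Skel.p j : Skel A J) := by rintro k ⟨⟩

/-- The skeleton with a coatom above each `a x` and each `p j`, and a top element: the bounded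
lattice used as first factor of the box construction. -/
abbrev Frame (A J : Type*) [Lattice A] [OrderBot A] [LinearOrder J] := Capped (@HasCap A J)

namespace Frame

/-- The copy of `A` in the frame. -/
abbrev a (x : A) : Frame A J := .base (.a x)
/-- The atom with index `j`. -/
abbrev p (j : J) : Frame A J := .base (.p j)
/-- The chain element with index `k`. -/
abbrev c (k : WithBot J) : Frame A J := .base (.c k)
/-- The coatom over `a x`. -/
abbrev a' (x : A) : Frame A J := .cap (.a x) (hasCap_a x)
/-- The coatom over `p j`. -/
abbrev p' (j : J) : Frame A J := .cap (.p j) (hasCap_p j)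

@[elab_as_elim]
lemma cases {P : Frame A J → Prop} (ha : ∀ x, P (a x)) (hp : ∀ j, P (p j)) (hc : ∀ k, P (c k))
    (ha' : ∀ x, P (a' x)) (hp' : ∀ j, P (p' j)) (ht : P ⊤) (s : Frame A J) :
    P s := by
  rcases s with (x | j | k) | ⟨x | j | k, h⟩ | _
  · exact ha x
  · exact hp j
  · exact hc k
  · exact ha' x
  · exact hp' j
  · exact absurd rfl (h k)
  · exact ht

variable {C : Type*} [Lattice C] [OrderBot C]

/-- The thresholds: `t j` at the coatom above `p j`, and `⊥` everywhere else. -/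
def thr (t : J → C) : Frame A J → C
  | .cap (.p j) _ => t j
  | _ => ⊥

/-- `Frame.thr` as a marking; nonzero thresholds occur only at coatoms. -/
def marking (t : J → C) : Marking (Frame A J) C where
  thr := thr t
  thr_bot := rfl
  thr_top := rfl
  eq_top u v huv hu := by
    rcases u with l | ⟨l, h⟩ | _
    · exact absurd rfl hu
    · exact Capped.eq_top_of_cap_lt huv
    · exact absurd rfl hu

variable {t : J → C}

@[simp] lemma thr_base (l : Skel A J) : (marking t).thr (.base l) = ⊥ := rfl
@[simp] lemma thr_a' (x : A) : (marking t).thr (a' x : Frame A J) = ⊥ := rfl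
@[simp] lemma thr_p' (j : J) : (marking t).thr (p' j : Frame A J) = t j := rfl

lemma sepHyp : SepHyp (marking t : Marking (Frame A J) C) := by
  intro s α hs
  by_cases h0 : (marking t).thr s = ⊥
  · exact Or.inl ⟨s, le_rfl, h0, hs⟩
  revert hs h0
  refine Frame.cases ?_ ?_ ?_ ?_ ?_ ?_ s <;> try (intros; simp_all; done)
  · intro j hs h0
    by_cases h : (p j : Frame A J) ≤ α
    · right
      revert hs h
      refine Frame.cases ?_ ?_ ?_ ?_ ?_ ?_ α
      · intro x hs h; simp at h
      · intro i hs h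
        simp only [Capped.base_le_base, Skel.p_le_p] at h
        subst h
        exact ⟨c j, rfl, by simp, Capped.base_ne_top _, Capped.cap_sup_base _ (by simp)⟩
      · intro k hs h
        exact ⟨c k, rfl, le_rfl, Capped.base_ne_top _, Capped.cap_sup_base _ (by simp)⟩
      · intro x hs h; simp at h
      · intro i hs h
        simp only [Capped.base_le_cap, Skel.p_le_p] at h
        subst h
        exact absurd le_rfl hs
      · intro hs h
        exact absurd le_top hs
    · exact Or.inl ⟨p j, by simp, rfl, h⟩
  · intro hs h0; exact absurd rfl h0

lemma exists_p_inf_eq_bot [Nonempty J] [NoMaxOrder J] (l : Skel A J) :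
    ∃ j, l ⊓ .p j = (⊥ : Skel A J) := by
  rcases l with x | i | k
  · exact ⟨Classical.arbitrary J, rfl⟩
  · obtain ⟨j, hj⟩ := exists_gt i
    exact ⟨j, if_neg hj.ne⟩
  · induction k with
    | bot => exact ⟨Classical.arbitrary J, Skel.c_inf_p (WithBot.bot_lt_coe _)⟩
    | coe k =>
      obtain ⟨j, hj⟩ := exists_gt k
      exact ⟨j, Skel.c_inf_p (WithBot.coe_lt_coe.2 hj)⟩

lemma simpleHyp [Nonempty J] [NoMaxOrder J] [Nontrivial A]
    (ht : ∃ i j, i ≠ j ∧ t i = ⊥ ∧ t j = ⊥) :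
    SimpleHyp (marking t : Marking (Frame A J) C) := by
  intro r P hr hP hsup hinf
  obtain ⟨i, j, hij, hi, hj⟩ := ht
  obtain ⟨x0, hx0⟩ := exists_ne (⊥ : A)
  have stepA : ∀ l : Skel A J, l ≠ ⊥ → r ⊥ (.base l) → r ⊥ ⊤ := by
    intro l hl h
    have : ∃ i, t i = ⊥ ∧ ¬ l ≤ .p i := by
      by_contra! hcon
      have h1 := hcon i hi
      have h2 := hcon j hj
      have h3 := le_inf h1 h2
      have h4 : (.p i ⊓ .p j : Skel A J) = ⊥ := if_neg hij
      rw [h4, le_bot_iff] at h3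
      exact hl h3
    obtain ⟨n, hn, hln⟩ := this
    have h1 := hsup _ _ (a' ⊥) h
    have h2 := hsup _ _ (p' n) h
    rw [bot_sup_eq, sup_comm, Capped.cap_sup_base _ (by rw [← Skel.bot_eq, le_bot_iff]; exact hl)]
      at h1
    rw [bot_sup_eq, sup_comm, Capped.cap_sup_base _ hln] at h2
    have h3 := hinf _ _ (p' n) (hP _ rfl) (hP _ rfl) (hP _ hn) h1
    rw [top_inf_eq, Capped.cap_inf_cap _ _ (by rintro ⟨⟩)] at h3
    exact hr.trans h3 h2
  have stepB : ∀ u : Frame A J, u ≠ ⊤ → P u → r u ⊤ → r ⊥ ⊤ := by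
    intro u hu hPu h
    have : ∃ j, u ⊓ p j = ⊥ := by
      rcases u with l | ⟨l, hl⟩ | _
      · obtain ⟨j, hj⟩ := exists_p_inf_eq_bot l
        exact ⟨j, by rw [Capped.base_inf_base, hj]; rfl⟩
      · obtain ⟨j, hj⟩ := exists_p_inf_eq_bot l
        exact ⟨j, by rw [Capped.cap_inf_base, hj]; rfl⟩
      · exact absurd rfl hu
    obtain ⟨n, hn⟩ := this
    have h1 := hinf _ _ (p n) hPu (hP _ rfl) (hP _ rfl) h
    rw [hn, top_inf_eq] at h1
    exact stepA _ (by rintro ⟨⟩) h1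
  intro u v huv hPu hPv h
  rcases v with m | ⟨m, hm⟩ | _
  · rcases u with l | ⟨l, hl⟩ | _
    · have hlm : l ≤ m := huv.le
      have hne : l ≠ m := by rintro rfl; exact lt_irrefl _ huv
      rcases l with x | i | k
      · have h1 := hsup _ _ (a' x) h
        rw [sup_comm (Capped.base m), Capped.cap_sup_base _ (fun h => hne (le_antisymm hlm h)),
          sup_eq_right.2 (by simp)] at h1
        exact stepB _ (Capped.cap_ne_top _ _) (hP _ rfl) h1
      · rcases m with y | n | k
        · simp at hlm
        · simp at hlm; simp [hlm] at hne
        · have h1 := hinf _ _ (a x0) hPu hPv (hP _ rfl) h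
          exact stepA _ (by rintro ⟨⟩; exact hx0 rfl) h1
      · rcases m with y | n | k'
        · simp at hlm
        · simp at hlm
        · simp only [Skel.c_le_c] at hlm
          have hkk : k < k' := lt_of_le_of_ne hlm (by rintro rfl; exact hne rfl)
          induction k' with
          | bot => simp at hkk
          | coe n =>
            have h1 := hinf _ _ (p n) hPu hPv (hP _ rfl) h
            have h2 : (c k ⊓ p n : Frame A J) = ⊥ := by
              rw [Capped.base_inf_base, Capped.bot_eq]
              exact congrArg _ (if_neg (not_le.2 hkk))
            rw [h2, inf_eq_right.2 (by simp)] at h1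
            exact stepA _ (by rintro ⟨⟩) h1
    · exact absurd huv.le Capped.cap_le_base
    · exact absurd huv.le Capped.top_le_base
  · rcases u with l | ⟨l, hl⟩ | _
    · have h1 := hsup _ _ (c ⊥) h
      rw [Capped.base_sup_base, Capped.cap_sup_base] at h1
      · exact stepB _ (Capped.base_ne_top _) (hP _ rfl) h1
      · rcases m with y | n | k
        · simp
        · simp
        · exact absurd rfl (hm k)
    · cases Capped.eq_top_of_cap_lt huv
    · exact absurd huv.le Capped.top_le_cap
  · exact stepB u huv.ne hPu h

end Frame
end Frame
end StrongInd

/-! ### Gluing, to create a node -/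

namespace StrongInd

section Small

/-- A fixed bounded lattice to which the box construction is applied with zero thresholds. The frame
over `Bool` and `ℕ` serves because `SepHyp` and `SimpleHyp` are already known for it. -/
abbrev T := Frame Bool ℕ

/-- The marking of `T` with all thresholds zero. -/
noncomputable def mT (C : Type*) [Lattice C] [OrderBot C] : Marking T C := Frame.marking fun _ => ⊥

variable {C : Type*} [Lattice C] [OrderBot C]

@[simp] lemma mT_thr (s : T) : (mT C).thr s = ⊥ := by
  induction s using Frame.cases <;> rfl

lemma sepHyp_mT : SepHyp (mT C) := Frame.sepHyp
lemma simpleHyp_mT : SimpleHyp (mT C) := Frame.simpleHyp ⟨0, 1, by simp, rfl, rfl⟩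

/-- The element of `T` that is an atom and a coatom. -/
noncomputable def t0 : T := Frame.a' ⊥
/-- Together with `t2`, one of two coatoms of `T` that join to `⊤` and do not lie above `t0`. -/
noncomputable def t1 : T := Frame.p' 0
/-- See `t1`. -/
noncomputable def t2 : T := Frame.p' 1

lemma t0_ne_bot : t0 ≠ ⊥ := by rintro ⟨⟩
lemma t0_ne_top : t0 ≠ ⊤ := by rintro ⟨⟩
lemma t1_ne_bot : t1 ≠ ⊥ := by rintro ⟨⟩
lemma t2_ne_bot : t2 ≠ ⊥ := by rintro ⟨⟩
lemma t1_sup_t2 : t1 ⊔ t2 = ⊤ := Capped.cap_sup_cap _ _ (by simp)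
lemma not_t0_le_t1 : ¬ t0 ≤ t1 := by simp [t0, t1]
lemma not_t0_le_t2 : ¬ t0 ≤ t2 := by simp [t0, t2]
lemma le_t0 {t : T} (h : t ≤ t0) : t = ⊥ ∨ t = t0 := by
  rcases t with l | ⟨l, hl⟩ | _
  · left
    have : l ≤ ⊥ := h
    rw [le_bot_iff.1 this]; rfl
  · right
    have := Capped.cap_le_cap.1 h
    subst this; rfl
  · exact absurd h Capped.top_le_cap

lemma mem_gen_mT {s t : T} {z w : C} :
    (t, w) ∈ gen (mT C) s z ↔ t = ⊥ ∨ w = ⊥ ∨ (t ≤ s ∧ w ≤ z) := by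
  rw [mem_gen, mT_thr, le_bot_iff]
  constructor
  · tauto
  · rintro (rfl | rfl | h) <;> simp_all

lemma Box.exists_le_D {S : Type*} [Lattice S] [BoundedOrder S] {m : Marking S C} (H : Box m) :
    ∃ b, H ≤ D m b := by
  obtain ⟨B, hB, ⟨b, hb⟩, hH⟩ := H.2
  refine ⟨b, ?_⟩
  rw [Box.le_def]
  rintro ⟨t, w⟩ h
  rw [mem_D]
  exact ((hH _).1 h _ hb).imp le_bot_iff.1 id

lemma BCon_gen {θ : C → C → Prop} (hθ : LatCon C θ) {t : T} (ht : t ≠ ⊥) {y y' : C} :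
    BCon θ (gen (mT C) t y) (gen (mT C) t y') ↔ θ y y' := by
  constructor
  · rintro ⟨h, h'⟩
    obtain ⟨z, -, h1, h2⟩ := h t y (mem_gen_self _ _)
    obtain ⟨w, -, h3, h4⟩ := h' t y' (mem_gen_self _ _)
    have h2 : z ≤ y' := (mem_gen.1 h2).2.resolve_left ht
    have h4 : w ≤ y := (mem_gen.1 h4).2.resolve_left ht
    have h5 := con_sup hθ h1 (con_refl hθ y')
    have h6 := con_sup hθ (con_refl hθ y) h3
    rw [sup_eq_right.2 h2] at h5
    rw [sup_eq_left.2 h4] at h6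
    exact con_trans hθ (con_symm hθ h6) h5
  · intro h
    have := con_inf (latCon_BCon (m := mT C) hθ) (con_refl (latCon_BCon hθ) (gen (mT C) t (y ⊔ y')))
      ((BCon_D (m := mT C) hθ).2 h)
    simpa [gen_inf_D] using this

end Small

section Glue

variable {K : Type*} [Lattice K] [OrderBot K] {x : K}

/-- The filter above `x`, tensored with `T`. -/
abbrev Upper (x : K) := Box (mT (Set.Ici x))

/-- The value of `n` in the column of `t0`. -/
noncomputable def col (n : Upper x) : Set.Ici x := (n.exists_col t0_ne_bot).choose

lemma mem_col {n : Upper x} {z : Set.Ici x} : (t0, z) ∈ n ↔ z ≤ col n :=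
  (n.exists_col t0_ne_bot).choose_spec z

lemma col_mono {n p : Upper x} (h : n ≤ p) : col n ≤ col p :=
  mem_col.1 (h (mem_col.2 le_rfl))

lemma col_inf (n p : Upper x) : col (n ⊓ p) = col n ⊓ col p :=
  le_antisymm (le_inf (col_mono inf_le_left) (col_mono inf_le_right))
    (mem_col.1 ⟨mem_col.2 inf_le_left, mem_col.2 inf_le_right⟩)

lemma col_gen_t0 (y : Set.Ici x) : col (gen (mT _) t0 y) = y := by
  apply le_antisymm
  · have := mem_col.2 (le_refl (col (gen (mT _) t0 y)))
    exact (mem_gen.1 this).2.resolve_left t0_ne_bot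
  · exact mem_col.1 (mem_gen_self _ _)

lemma col_gen {t : T} (ht : ¬ t0 ≤ t) (y : Set.Ici x) : col (gen (mT _) t y) = ⊥ := by
  have := mem_gen.1 (mem_col.2 (le_refl (col (gen (mT _) t y))))
  simpa [ht] using this.1

/-- The gluing of `K` and `Upper x` along the filter `Set.Ici x`, which is identified with the
column of `t0`. -/
def Glue (x : K) : Type _ :=
  {u : K × Upper x // (x ≤ u.1 → (col u.2 : K) = u.1) ∧ (¬ x ≤ u.1 → u.2 = ⊥)}

namespace Glue

instance : PartialOrder (Glue x) := inferInstanceAs (PartialOrder {u : K × Upper x // _})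

/-- The component in `K`. -/
def fst (u : Glue x) : K := u.1.1
/-- The component in `Upper x`, which is `⊥` unless the first component lies above `x`. -/
def snd (u : Glue x) : Upper x := u.1.2

lemma le_def {u v : Glue x} : u ≤ v ↔ u.fst ≤ v.fst ∧ u.snd ≤ v.snd := Iff.rfl
lemma ext {u v : Glue x} (h : u.fst = v.fst) (h' : u.snd = v.snd) : u = v :=
  Subtype.ext (Prod.ext h h')
lemma col_snd {u : Glue x} (h : x ≤ u.fst) : (col u.snd : K) = u.fst := u.2.1 h
lemma snd_eq_bot {u : Glue x} (h : ¬ x ≤ u.fst) : u.snd = ⊥ := u.2.2 h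

/-- The embedding of the upper part. -/
noncomputable def up (n : Upper x) : Glue x :=
  ⟨(col n, n), fun _ => rfl, fun h => absurd (col n).2 h⟩

/-- The copy in the column of `t0` of the join with `x`. -/
noncomputable def tau (x k : K) : Upper x := gen (mT _) t0 ⟨k ⊔ x, le_sup_right⟩

open Classical in
/-- The embedding of the lower part. -/
noncomputable def low (x k : K) : Glue x :=
  ⟨(k, if x ≤ k then tau x k else ⊥), fun h => by
    simp only at h
    simp [h, tau, col_gen_t0], fun h => if_neg h⟩

lemma fst_low (k : K) : (low x k).fst = k := rfl
lemma snd_low_of_le {k : K} (h : x ≤ k) : (low x k).snd = tau x k := if_pos h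
lemma snd_low_of_not {k : K} (h : ¬ x ≤ k) : (low x k).snd = ⊥ := if_neg h

lemma low_le {k : K} {u : Glue x} : low x k ≤ u ↔ k ≤ u.fst := by
  refine ⟨fun h => h.1, fun h => le_def.2 ⟨h, ?_⟩⟩
  by_cases hx : x ≤ k
  · rw [snd_low_of_le hx, tau, gen_le, mem_col, ← Subtype.coe_le_coe, col_snd (hx.trans h)]
    simpa using ⟨h, hx.trans h⟩
  · rw [snd_low_of_not hx]; exact bot_le

lemma up_le {n : Upper x} {u : Glue x} : up n ≤ u ↔ x ≤ u.fst ∧ n ≤ u.snd := by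
  constructor
  · exact fun h => ⟨(col n).2.trans h.1, h.2⟩
  · rintro ⟨h1, h2⟩
    refine le_def.2 ⟨?_, h2⟩
    rw [← col_snd h1]
    exact col_mono h2

lemma eq_up {u : Glue x} (h : x ≤ u.fst) : u = up u.snd := ext (col_snd h).symm rfl

lemma snd_up (n : Upper x) : (up n).snd = n := rfl
lemma fst_up (n : Upper x) : (up n).fst = col n := rfl

open Classical in
noncomputable instance : Lattice (Glue x) where
  inf u v := ⟨(u.fst ⊓ v.fst, u.snd ⊓ v.snd), fun h => by
      rw [col_inf]
      simp only [le_inf_iff] at h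
      rw [← col_snd h.1, ← col_snd h.2]; rfl, fun h => by
      simp only [le_inf_iff, not_and_or] at h
      rcases h with h | h
      · rw [snd_eq_bot h, bot_inf_eq]
      · rw [snd_eq_bot h, inf_bot_eq]⟩
  inf_le_left u v := ⟨inf_le_left, inf_le_left⟩
  inf_le_right u v := ⟨inf_le_right, inf_le_right⟩
  le_inf u v w h h' := ⟨le_inf h.1 h'.1, le_inf h.2 h'.2⟩
  sup u v := if x ≤ u.fst ⊔ v.fst then up (u.snd ⊔ v.snd ⊔ tau x (u.fst ⊔ v.fst))
    else low x (u.fst ⊔ v.fst)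
  le_sup_left u v := by
    split_ifs with h
    · refine ⟨?_, le_sup_left.trans le_sup_left⟩
      have : (tau x (u.fst ⊔ v.fst)) ≤ u.snd ⊔ v.snd ⊔ tau x (u.fst ⊔ v.fst) := le_sup_right
      have := col_mono this
      rw [tau, col_gen_t0] at this
      exact (le_sup_left.trans le_sup_left).trans (Subtype.coe_le_coe.2 this)
    · exact le_def.2 ⟨le_sup_left, by rw [snd_eq_bot fun h' => h (h'.trans le_sup_left)]; exact bot_le⟩
  le_sup_right u v := by
    split_ifs with h
    · refine ⟨?_, le_sup_right.trans le_sup_left⟩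
      have : (tau x (u.fst ⊔ v.fst)) ≤ u.snd ⊔ v.snd ⊔ tau x (u.fst ⊔ v.fst) := le_sup_right
      have := col_mono this
      rw [tau, col_gen_t0] at this
      exact (le_sup_right.trans le_sup_left).trans (Subtype.coe_le_coe.2 this)
    · exact le_def.2 ⟨le_sup_right, by rw [snd_eq_bot fun h' => h (h'.trans le_sup_right)]; exact bot_le⟩
  sup_le u v w h h' := by
    split_ifs with hx
    · have h1 : u.fst ⊔ v.fst ≤ w.fst := sup_le h.1 h'.1
      refine up_le.2 ⟨hx.trans h1, sup_le (sup_le h.2 h'.2) ?_⟩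
      rw [← snd_low_of_le hx]
      exact (low_le.2 h1).2
    · exact low_le.2 (sup_le h.1 h'.1)

noncomputable instance : OrderBot (Glue x) where
  bot := low x ⊥
  bot_le u := low_le.2 bot_le

lemma fst_inf (u v : Glue x) : (u ⊓ v).fst = u.fst ⊓ v.fst := rfl
lemma snd_inf (u v : Glue x) : (u ⊓ v).snd = u.snd ⊓ v.snd := rfl

lemma fst_sup_of_not {u v : Glue x} (h : ¬ x ≤ u.fst ⊔ v.fst) : (u ⊔ v).fst = u.fst ⊔ v.fst :=
  congrArg fst (if_neg h)

lemma low_bot : low x ⊥ = ⊥ := rfl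

lemma low_sup (k l : K) : low x (k ⊔ l) = low x k ⊔ low x l :=
  le_antisymm (low_le.2 (sup_le (low_le.1 le_sup_left) (low_le.1 le_sup_right)))
    (sup_le (low_le.2 le_sup_left) (low_le.2 le_sup_right))

lemma eq_low_of_le {u : Glue x} {k : K} (h : u ≤ low x k) : u = low x u.fst := by
  refine le_antisymm (le_def.2 ⟨le_rfl, ?_⟩) (low_le.2 le_rfl)
  by_cases hx : x ≤ u.fst
  · rw [snd_low_of_le hx, Box.le_def]
    rintro ⟨t, w⟩ hw
    have h1 := h.2 hw
    change (t, w) ∈ (low x k).snd at h1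
    rw [snd_low_of_le (k := k) (hx.trans h.1)] at h1
    rw [tau, mem_gen_mT] at h1 ⊢
    rcases h1 with h1 | h1 | h1
    · exact Or.inl h1
    · exact Or.inr (Or.inl h1)
    · rcases le_t0 h1.1 with h2 | h2
      · exact Or.inl h2
      · right; right
        refine ⟨h1.1, ?_⟩
        subst h2
        have h3 := mem_col.1 hw
        rw [← Subtype.coe_le_coe] at h3 ⊢
        exact (h3.trans (col_snd hx).le).trans le_sup_left
  · rw [snd_eq_bot hx]; exact bot_le

lemma eq_low_of_not {u : Glue x} (h : ¬ x ≤ u.fst) : u = low x u.fst :=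
  ext rfl ((snd_eq_bot h).trans (if_neg h).symm)

lemma inf_low (u : Glue x) (k : K) : u ⊓ low x k = low x (u.fst ⊓ k) :=
  eq_low_of_le (k := k) inf_le_right

lemma low_inf (k l : K) : low x (k ⊓ l) = low x k ⊓ low x l :=
  (inf_low (low x k) l).symm

lemma low_injective : Function.Injective (low x) := fun k l h => congrArg fst h

lemma up_sup (n p : Upper x) : up (n ⊔ p) = up n ⊔ up p := by
  apply le_antisymm
  · refine up_le.2 ⟨?_, sup_le (up_le.1 le_sup_left).2 (up_le.1 le_sup_right).2⟩
    exact (up_le.1 (le_sup_left : up n ≤ up n ⊔ up p)).1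
  · exact sup_le (up_le.2 ⟨(col _).2, le_sup_left⟩) (up_le.2 ⟨(col _).2, le_sup_right⟩)

lemma up_inf (n p : Upper x) : up (n ⊓ p) = up n ⊓ up p := ext (by
  rw [fst_inf, fst_up, fst_up, fst_up, col_inf]; rfl) rfl

lemma up_gen_t0 (y : Set.Ici x) : up (gen (mT _) t0 y) = low x y := by
  rw [eq_up (u := low x y) y.2, snd_low_of_le y.2, tau]
  congr 2
  exact Subtype.ext (sup_eq_left.2 y.2).symm

lemma up_tau (k : K) : up (tau x k) = low x (k ⊔ x) := up_gen_t0 _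

/-- The retraction onto the upper part. -/
noncomputable def hat (u : Glue x) : Upper x := (u ⊔ low x x).snd

lemma up_hat (u : Glue x) : up (hat u) = u ⊔ low x x :=
  (eq_up (low_le.1 le_sup_right)).symm

lemma hat_sup (u v : Glue x) : hat (u ⊔ v) = hat u ⊔ hat v := by
  have : up (hat (u ⊔ v)) = up (hat u ⊔ hat v) := by
    rw [up_sup, up_hat, up_hat, up_hat, sup_sup_distrib_right]
  exact congrArg snd this

lemma hat_low (k : K) : hat (low x k) = tau x k := by
  have : up (hat (low x k)) = up (tau x k) := by rw [up_hat, up_tau, low_sup]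
  exact congrArg snd this

lemma hat_of_le {u : Glue x} (h : x ≤ u.fst) : hat u = u.snd := by
  have : u ⊔ low x x = u := sup_eq_left.2 (low_le.2 h)
  rw [hat, this]

lemma col_hat (u : Glue x) : (col (hat u) : K) = u.fst ⊔ x := by
  by_cases h : x ≤ u.fst
  · rw [hat_of_le h, col_snd h, sup_eq_left.2 h]
  · rw [eq_low_of_not h, hat_low, tau, col_gen_t0]; rfl

lemma hat_inf {u v : Glue x} (h : x ≤ (u ⊓ v).fst) : hat (u ⊓ v) = hat u ⊓ hat v := by
  rw [hat_of_le h, hat_of_le (h.trans inf_le_left), hat_of_le (h.trans inf_le_right)]; rfl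

lemma tau_inf (k : K) (n : Upper x) :
    tau x k ⊓ n = gen (mT _) t0 (⟨k ⊔ x, le_sup_right⟩ ⊓ col n) := by
  apply le_antisymm
  · rw [Box.le_def]
    rintro ⟨t, w⟩ ⟨h, h'⟩
    change (t, w) ∈ tau x k at h
    rw [tau, mem_gen_mT] at h
    rw [mem_gen_mT]
    rcases h with h | h | h
    · exact Or.inl h
    · exact Or.inr (Or.inl h)
    · rcases le_t0 h.1 with h2 | h2
      · exact Or.inl h2
      · subst h2
        exact Or.inr (Or.inr ⟨le_rfl, le_inf h.2 (mem_col.1 h')⟩)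
  · exact le_inf (gen_mono le_rfl inf_le_left) (gen_le.2 (mem_col.2 inf_le_right))

variable {θ : K → K → Prop}

/-- The restriction of a relation to the filter above `x`. -/
def res (x : K) (θ : K → K → Prop) : Set.Ici x → Set.Ici x → Prop := fun y z => θ y z

lemma latCon_res (hθ : LatCon K θ) : LatCon (Set.Ici x) (res x θ) :=
  ⟨⟨fun _ => con_refl hθ _, con_symm hθ, con_trans hθ⟩, fun _ _ _ _ h h' =>
    ⟨con_sup hθ h h', con_inf hθ h h'⟩⟩

lemma con_col (hθ : LatCon K θ) {n p : Upper x} (h : BCon (res x θ) n p) :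
    θ (col n) (col p) := by
  have h1 := con_inf (latCon_BCon (latCon_res (x := x) hθ)) (con_refl (latCon_BCon (latCon_res hθ))
    (tau x (col n ⊔ col p : K))) h
  rw [tau_inf, tau_inf, BCon_gen (latCon_res hθ) t0_ne_bot, inf_eq_right.2, inf_eq_right.2] at h1
  · exact h1
  · exact le_sup_right.trans (le_sup_left : (col n ⊔ col p : K) ≤ (col n ⊔ col p : K) ⊔ x)
  · exact le_sup_left.trans (le_sup_left : (col n ⊔ col p : K) ≤ (col n ⊔ col p : K) ⊔ x)

lemma BCon_tau (hθ : LatCon K θ) {k l : K} (h : θ k l) : BCon (res x θ) (tau x k) (tau x l) :=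
  (BCon_gen (latCon_res hθ) t0_ne_bot).2 (con_sup hθ h (con_refl hθ x))

/-- The extension of the congruence `θ` to the glued lattice. -/
def GCon (θ : K → K → Prop) (u v : Glue x) : Prop :=
  θ u.fst v.fst ∧ BCon (res x θ) (hat u) (hat v)

/-- If one of two congruent elements lies above `x`, then the other is congruent to its join
with `x`. -/
lemma con_sup_self (hθ : LatCon K θ) {k l : K} (h : θ k l) (hk : x ≤ k) : θ (l ⊔ x) l := by
  have := con_sup hθ h (con_refl hθ x)
  rw [sup_eq_left.2 hk] at this
  exact con_trans hθ (con_symm hθ this) h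

lemma GCon.fst_sup (hθ : LatCon K θ) {u u' v v' : Glue x} (h : GCon θ u u') (h' : GCon θ v v') :
    θ (u ⊔ v).fst (u' ⊔ v').fst := by
  have hsup := con_sup hθ h.1 h'.1
  have hhat : θ ((u ⊔ v).fst ⊔ x) ((u' ⊔ v').fst ⊔ x) := by
    rw [← col_hat, ← col_hat, hat_sup, hat_sup]
    exact con_col hθ (con_sup (latCon_BCon (latCon_res hθ)) h.2 h'.2)
  have big : ∀ {u v : Glue x}, x ≤ u.fst ⊔ v.fst → x ≤ (u ⊔ v).fst := fun h =>
    h.trans (sup_le (le_def.1 le_sup_left).1 (le_def.1 le_sup_right).1)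
  by_cases h1 : x ≤ u.fst ⊔ v.fst
  · rw [sup_eq_left.2 (big h1)] at hhat
    by_cases h2 : x ≤ u'.fst ⊔ v'.fst
    · rwa [sup_eq_left.2 (big h2)] at hhat
    · rw [fst_sup_of_not h2] at hhat ⊢
      exact con_trans hθ hhat (con_sup_self hθ hsup h1)
  · rw [fst_sup_of_not h1] at hhat ⊢
    by_cases h2 : x ≤ u'.fst ⊔ v'.fst
    · rw [sup_eq_left.2 (big h2)] at hhat
      exact con_trans hθ (con_symm hθ (con_sup_self hθ (con_symm hθ hsup) h2)) hhat
    · rwa [fst_sup_of_not h2]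

lemma GCon.hat_inf_aux (hθ : LatCon K θ) {u u' v v' : Glue x} (h : GCon θ u u')
    (h' : GCon θ v v') (h1 : x ≤ (u ⊓ v).fst) (h2 : ¬ x ≤ u'.fst) :
    BCon (res x θ) (hat (u ⊓ v)) (hat (u' ⊓ v')) := by
  have hr := latCon_res (x := x) hθ
  have h3 : ¬ x ≤ (u' ⊓ v').fst := fun h => h2 (h.trans inf_le_left)
  have h4 := con_inf (latCon_BCon hr) h.2 h'.2
  rw [hat_inf h1]
  refine con_trans (latCon_BCon hr) h4 ?_
  rw [eq_low_of_not h3, hat_low, eq_low_of_not h2, hat_low, tau_inf, tau]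
  rw [BCon_gen hr t0_ne_bot]
  change θ ((u'.fst ⊔ x) ⊓ col (hat v')) ((u' ⊓ v').fst ⊔ x)
  rw [col_hat]
  have h5 := con_sup_self hθ h.1 (h1.trans inf_le_left)
  have h6 := con_sup_self hθ h'.1 (h1.trans inf_le_right)
  refine con_trans hθ (con_inf hθ h5 h6) (con_symm hθ ?_)
  exact con_sup_self hθ (con_inf hθ h.1 h'.1) h1

lemma GCon.hat_inf_aux2 (hθ : LatCon K θ) {u u' v v' : Glue x} (h : GCon θ u u')
    (h' : GCon θ v v') (h1 : x ≤ (u ⊓ v).fst) (h2 : ¬ x ≤ (u' ⊓ v').fst) :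
    BCon (res x θ) (hat (u ⊓ v)) (hat (u' ⊓ v')) := by
  rw [fst_inf, le_inf_iff, not_and_or] at h2
  rcases h2 with h2 | h2
  · exact h.hat_inf_aux hθ h' h1 h2
  · rw [inf_comm] at h1 ⊢
    rw [inf_comm u']
    exact h'.hat_inf_aux hθ h h1 h2

lemma latCon_GCon (hθ : LatCon K θ) : LatCon (Glue x) (GCon θ) := by
  have hr := latCon_BCon (m := mT _) (latCon_res (x := x) hθ)
  have hsym : ∀ {u v : Glue x}, GCon θ u v → GCon θ v u :=
    fun h => ⟨con_symm hθ h.1, con_symm hr h.2⟩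
  refine ⟨⟨fun u => ⟨con_refl hθ _, con_refl hr _⟩, hsym,
    fun h h' => ⟨con_trans hθ h.1 h'.1, con_trans hr h.2 h'.2⟩⟩, ?_⟩
  intro u u' v v' h h'
  refine ⟨⟨h.fst_sup hθ h', ?_⟩, ⟨con_inf hθ h.1 h'.1, ?_⟩⟩
  · rw [hat_sup, hat_sup]
    exact con_sup hr h.2 h'.2
  · by_cases h1 : x ≤ (u ⊓ v).fst
    · by_cases h2 : x ≤ (u' ⊓ v').fst
      · rw [hat_inf h1, hat_inf h2]
        exact con_inf hr h.2 h'.2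
      · exact h.hat_inf_aux2 hθ h' h1 h2
    · by_cases h2 : x ≤ (u' ⊓ v').fst
      · exact con_symm hr ((hsym h).hat_inf_aux2 hθ (hsym h') h2 h1)
      · rw [eq_low_of_not h1, eq_low_of_not h2, hat_low, hat_low]
        exact BCon_tau hθ (con_inf hθ h.1 h'.1)

lemma GCon_low (hθ : LatCon K θ) {k l : K} : GCon θ (low x k) (low x l) ↔ θ k l := by
  refine ⟨fun h => h.1, fun h => ⟨h, ?_⟩⟩
  rw [hat_low, hat_low]
  exact BCon_tau hθ h

lemma con_up_iff {Ψ : Glue x → Glue x → Prop} (hθ : LatCon K θ) (hΨ : LatCon (Glue x) Ψ)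
    (hlow : ∀ k l, Ψ (low x k) (low x l) ↔ θ k l) {n p : Upper x} :
    Ψ (up n) (up p) ↔ BCon (res x θ) n p := by
  have h1 : LatCon (Upper x) fun n p => Ψ (up n) (up p) := by
    refine ⟨⟨fun _ => con_refl hΨ _, con_symm hΨ, con_trans hΨ⟩, fun a b c d h h' => ?_⟩
    simp only [up_sup, up_inf]
    exact hΨ.2 _ _ _ _ h h'
  have h2 : LatCon (Set.Ici x) fun y z => Ψ (up (D _ y)) (up (D _ z)) := by
    refine ⟨⟨fun _ => con_refl hΨ _, con_symm hΨ, con_trans hΨ⟩, fun a b c d h h' => ?_⟩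
    simp only [← D_sup, ← D_inf, up_sup, up_inf]
    exact hΨ.2 _ _ _ _ h h'
  have h3 : ∀ {n p : Upper x}, Ψ (up n) (up p) ↔ BCon _ n p := fun {n p} =>
    con_iff_BCon sepHyp_mT simpleHyp_mT h2 h1 (fun _ _ => Iff.rfl)
  have h4 : (fun y z => Ψ (up (D _ y)) (up (D _ z))) = res x θ := by
    funext y z
    rw [← BCon_gen h2 t0_ne_bot, ← h3, up_gen_t0, up_gen_t0, hlow]; rfl
  rw [h3, h4]

lemma cpEmb_low : CPEmb K (Glue x) (low x) := by
  refine ⟨low_injective, low_sup, low_inf, fun θ hθ =>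
    ⟨GCon θ, ⟨latCon_GCon hθ, fun k l => GCon_low hθ⟩, ?_⟩⟩
  rintro Ψ ⟨hΨ, hlow⟩
  funext u v
  refine propext ⟨fun h => ⟨?_, ?_⟩, ?_⟩
  · have := con_inf hΨ h (con_refl hΨ (low x (u.fst ⊔ v.fst)))
    rw [inf_low, inf_low, hlow] at this
    simpa using this
  · rw [← con_up_iff hθ hΨ hlow, up_hat, up_hat]
    exact con_sup hΨ h (con_refl hΨ _)
  · have mixed : ∀ {u v : Glue x}, GCon θ u v → x ≤ u.fst → ¬ x ≤ v.fst → Ψ u v := by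
      intro u v h h1 h2
      have h3 := (con_up_iff hθ hΨ hlow).2 h.2
      rw [up_hat, up_hat, sup_eq_left.2 (low_le.2 h1)] at h3
      refine con_trans hΨ h3 ?_
      rw [eq_low_of_not h2, ← low_sup, hlow]
      exact con_sup_self hθ h.1 h1
    intro h
    by_cases h1 : x ≤ u.fst
    · by_cases h2 : x ≤ v.fst
      · have h3 := (con_up_iff hθ hΨ hlow).2 h.2
        rwa [up_hat, up_hat, sup_eq_left.2 (low_le.2 h1), sup_eq_left.2 (low_le.2 h2)] at h3
      · exact mixed h h1 h2
    · by_cases h2 : x ≤ v.fst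
      · exact con_symm hΨ (mixed ⟨con_symm hθ h.1, h.2.2, h.2.1⟩ h2 h1)
      · rw [eq_low_of_not h1, eq_low_of_not h2, hlow]
        exact h.1

end Glue

/-- `x` is a node of the principal ideal of `b`: it is comparable with all elements below `b`. -/
def Node {C : Type*} [Lattice C] (x b : C) : Prop := x < b ∧ ∀ u ≤ b, u ≤ x ∨ x ≤ u

lemma Glue.node_up {t : T} (ht0 : ¬ t0 ≤ t) (ht : t ≠ ⊥) {y : Set.Ici x} (hy : y ≠ ⊥) :
    Node (low x x) (up (gen (mT _) t y)) := by
  have hfst : (up (gen (mT _) t y)).fst = x := by rw [fst_up, col_gen ht0]; rfl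
  refine ⟨lt_of_le_of_ne (low_le.2 hfst.ge) ?_, ?_⟩
  · intro h
    have h1 := mem_gen_self (m := mT _) t y
    have h2 : (t, y) ∈ (low x x).snd := by rw [h]; exact h1
    rw [snd_low_of_le le_rfl, tau, mem_gen_mT] at h2
    rcases h2 with h2 | h2 | h2
    · exact ht h2
    · exact hy h2
    · apply hy
      refine le_bot_iff.1 (h2.2.trans ?_)
      rw [← Subtype.coe_le_coe]
      simp
  · intro u hu
    by_cases h : x ≤ u.fst
    · exact Or.inr (low_le.2 h)
    · left
      rw [eq_low_of_not h]
      exact low_le.2 (hu.1.trans hfst.le)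

lemma Glue.exists_nodes {y0 : K} (hy0 : x < y0) (u : Glue x) :
    ∃ b b', Node (low x x) b ∧ Node (low x x) b' ∧ u ≤ b ⊔ b' := by
  obtain ⟨b, hb⟩ := u.snd.exists_le_D
  set y : Set.Ici x := b ⊔ ⟨u.fst ⊔ y0, hy0.le.trans le_sup_right⟩ with hy
  have hyx : (⟨u.fst ⊔ y0, hy0.le.trans le_sup_right⟩ : Set.Ici x) ≤ y := le_sup_right
  rw [← Subtype.coe_le_coe] at hyx
  have hy' : y ≠ ⊥ := by
    intro h
    rw [h] at hyx
    exact absurd (le_sup_right.trans hyx) hy0.not_ge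
  refine ⟨_, _, node_up not_t0_le_t1 t1_ne_bot hy', node_up not_t0_le_t2 t2_ne_bot hy', ?_⟩
  rw [← up_sup, gen_sup_left, t1_sup_t2]
  have h1 : y ≤ col (D (mT _) y) := mem_col.1 (mem_D.2 (Or.inr le_rfl))
  refine ⟨(le_sup_left.trans hyx).trans h1, hb.trans (gen_mono le_rfl le_sup_left)⟩

end Glue
end StrongInd

/-! ### Automorphisms of the box lattice: constants and generators -/

namespace StrongInd

section Constants

variable {A J C : Type*} [Lattice A] [OrderBot A] [LinearOrder J] [Lattice C] [OrderBot C]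
variable {t : J → C}

/-- `J` is large compared with `C` and with the principal ideals of the frame: choosing for each
`s ≤ α`, with `α` proper, a set of at most `C` many indices leaves two indices unused. -/
def BigHyp (A J C : Type*) [Lattice A] [OrderBot A] [LinearOrder J] : Prop :=
  ∀ α : Frame A J, α ≠ ⊤ → ∀ F : Frame A J → Set J,
    (∀ s, ∃ φ : F s → C, Function.Injective φ) → ∃ i j, i ≠ j ∧ ∀ s ≤ α, i ∉ F s ∧ j ∉ F s

/-- There are `J` many pairwise complementary elements in the interval from `⊥` to `w`. In the box
lattice this characterises the constants `D b`. -/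
def IsConst (J : Type*) {L : Type*} [Lattice L] [OrderBot L] (w : L) : Prop :=
  ∃ u : J → L, ∀ i j, i ≠ j → u i ⊓ u j = ⊥ ∧ u i ⊔ u j = w

lemma mem_bot {S : Type*} [Lattice S] [BoundedOrder S] {m : Marking S C} {s : S} {z : C} :
    (s, z) ∈ (⊥ : Box m) ↔ s = ⊥ ∨ z = ⊥ := by
  rw [← D_bot, mem_D, le_bot_iff]

lemma isConst_D (q : J → J) (hq : Function.Injective q) (ht : ∀ i, t (q i) = ⊥) (b : C) :
    IsConst J (D (Frame.marking t : Marking (Frame A J) C) b) := by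
  refine ⟨fun i => gen _ (Frame.p' (q i)) b, fun i j hij => ?_⟩
  have hne : (Skel.p (q i) : Skel A J) ≠ Skel.p (q j) := fun h => hij (hq (by injection h))
  constructor
  · rw [gen_inf_gen (ht i) (ht j), Capped.cap_inf_cap _ _ hne]
    have : (Skel.p (q i) ⊓ Skel.p (q j) : Skel A J) = ⊥ := if_neg fun h => hij (hq h)
    rw [this]
    exact gen_bot_left _
  · rw [gen_sup_left, Capped.cap_sup_cap _ _ hne]; rfl

lemma eq_D_of_isConst (hbig : BigHyp A J C)
    {w : Box (Frame.marking t : Marking (Frame A J) C)} (hw : IsConst J w) : ∃ b, w = D _ b := by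
  obtain ⟨u, hu⟩ := hw
  have key : ∀ q : Frame A J × C, (∀ p ∈ w, InBox q p) → q.1 ≠ ⊤ → w ≤ D _ q.2 := by
    intro q hq hqt
    obtain ⟨i, j, hij, hF⟩ := hbig q.1 hqt (fun s => {i | s ≠ ⊥ ∧ ∃ z ≠ ⊥, (s, z) ∈ u i}) (by
      intro s
      have hch : ∀ i : {i | s ≠ ⊥ ∧ ∃ z ≠ ⊥, (s, z) ∈ u i}, ∃ z ≠ ⊥, (s, z) ∈ u i := fun i => i.2.2
      choose φ hφ using hch
      refine ⟨φ, fun i j h => ?_⟩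
      by_contra hne
      have h1 : (s, φ i) ∈ u i ⊓ u j := ⟨(hφ i).2, by rw [h]; exact (hφ j).2⟩
      rw [(hu i j fun h => hne (Subtype.ext h)).1, mem_bot] at h1
      exact h1.elim i.2.1 (hφ i).1)
    have h1 : ∀ n, u n ≤ w → (∀ s ≤ q.1, ¬ (s ≠ ⊥ ∧ ∃ z ≠ ⊥, (s, z) ∈ u n)) → u n ≤ D _ q.2 := by
      intro n hn hs
      rw [Box.le_def]
      rintro ⟨s, z⟩ hz
      rw [mem_D]
      rcases hq _ (hn hz) with h | h
      · by_contra! hcon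
        exact hs s h ⟨hcon.1, z, fun h => hcon.2 (h ▸ bot_le), hz⟩
      · exact Or.inr h
    rw [← (hu i j hij).2]
    exact sup_le (h1 i (by rw [← (hu i j hij).2]; exact le_sup_left) fun s hs => (hF s hs).1)
      (h1 j (by rw [← (hu i j hij).2]; exact le_sup_right) fun s hs => (hF s hs).2)
  obtain ⟨y, hy⟩ := w.exists_col (top_ne_bot (α := Frame A J))
  refine ⟨y, le_antisymm ?_ (D_le.2 ((hy y).2 le_rfl))⟩
  rw [Box.le_def]
  rintro ⟨s, z⟩ hz
  rw [mem_D, or_iff_not_imp_left]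
  intro hs
  rw [← hy]
  by_contra hcon
  obtain ⟨q, -, hq, hqz⟩ := Box.exists_sep hcon
  simp only [InBox, not_or] at hqz
  exact hqz.2 ((mem_D.1 (key q hq (fun h => hqz.1 h.ge) hz)).resolve_left hs)

lemma IsConst.map {L : Type*} [Lattice L] [OrderBot L] (β : L ≃o L) {w : L} (h : IsConst J w) :
    IsConst J (β w) := by
  obtain ⟨u, hu⟩ := h
  refine ⟨fun i => β (u i), fun i j hij => ?_⟩
  rw [← map_inf, ← map_sup, (hu i j hij).1, (hu i j hij).2]
  exact ⟨map_bot β, rfl⟩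

/-- Order automorphisms of the box lattice permute the constants. -/
lemma exists_gamma (hbig : BigHyp A J C) (q : J → J) (hq : Function.Injective q)
    (ht : ∀ i, t (q i) = ⊥)
    (β : Box (Frame.marking t : Marking (Frame A J) C) ≃o
      Box (Frame.marking t : Marking (Frame A J) C)) :
    ∃ γ : C ≃o C, ∀ y, β (D _ y) = D _ (γ y) := by
  have key : ∀ (β : Box (Frame.marking t : Marking (Frame A J) C) ≃o
      Box (Frame.marking t : Marking (Frame A J) C)) (y : C),
      ∃ y', β (D _ y) = D _ y' := fun β y => eq_D_of_isConst hbig ((isConst_D q hq ht y).map β)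
  choose g hg using key β
  choose g' hg' using key β.symm
  refine ⟨⟨⟨g, g', fun y => ?_, fun y => ?_⟩, ?_⟩, hg⟩
  · apply D_injective (m := (Frame.marking t : Marking (Frame A J) C))
    rw [← hg', ← hg, β.symm_apply_apply]
  · apply D_injective (m := (Frame.marking t : Marking (Frame A J) C))
    rw [← hg, ← hg', β.apply_symm_apply]
  · intro y z
    rw [← D_le_D (m := (Frame.marking t : Marking (Frame A J) C)) (z := y), ← β.le_iff_le, hg, hg,
      D_le_D]
    rfl

end Constants

section Lin

variable {S C : Type*} [Lattice S] [BoundedOrder S] [Nontrivial S] [Lattice C] [OrderBot C]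
variable {m : Marking S C}

lemma Node.map {x b : C} (h : Node x b) (γ : C ≃o C) : Node (γ x) (γ b) := by
  refine ⟨γ.lt_iff_lt.2 h.1, fun u hu => ?_⟩
  have := h.2 (γ.symm u) (by rwa [γ.symm_apply_le])
  rwa [γ.symm_apply_le, γ.le_symm_apply] at this

/-- `x` is nonzero and a node in two ideals whose generators join above any given element. -/
def NodeHyp (x : C) : Prop := x ≠ ⊥ ∧ ∀ u, ∃ b b', Node x b ∧ Node x b' ∧ u ≤ b ⊔ b'

lemma NodeHyp.map {x : C} (h : NodeHyp x) (γ : C ≃o C) : NodeHyp (γ x) := by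
  refine ⟨fun h' => h.1 (by simpa using h'), fun u => ?_⟩
  obtain ⟨b, b', h1, h2, h3⟩ := h.2 (γ.symm u)
  refine ⟨γ b, γ b', h1.map γ, h2.map γ, ?_⟩
  rwa [← map_sup, ← γ.symm_apply_le]

/-- The largest `s'` with `gen s' (γ x) ≤ β (gen s x)` controls `β (gen s b)` modulo the constant
`γ x`. -/
lemma exists_row_bound (β : Box m ≃o Box m) (γ : C ≃o C) (hD : ∀ y, β (D m y) = D m (γ y))
    (x : C) (s : S) : ∃ s', gen m s' (γ x) ≤ β (gen m s x) ∧
      ∀ b, Node x b → β (gen m s b) ≤ gen m s' (γ b) ⊔ D m (γ x) := by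
  obtain ⟨s', hs'⟩ := (β (gen m s x)).exists_row (γ x)
  refine ⟨s', gen_le.2 ((hs' s').2 le_rfl), fun b hb => ?_⟩
  rw [Box.le_def]
  rintro ⟨r, w⟩ hw
  have h1 : (r, w) ∈ D m (γ b) := by
    rw [← hD]; exact β.monotone (gen_mono le_top le_rfl) hw
  rcases mem_D.1 h1 with rfl | h1
  · exact Box.bot_left_mem _ _
  rcases (hb.map γ).2 w h1 with h2 | h2
  · exact (le_sup_right : D m (γ x) ≤ _) (mem_D.2 (Or.inr h2))
  · have h3 : (r, γ x) ∈ β (gen m s b) ⊓ D m (γ x) :=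
      ⟨Box.mem_of_le hw ⟨le_rfl, h2⟩, mem_D.2 (Or.inr le_rfl)⟩
    rw [← hD, ← map_inf, gen_inf_D, inf_eq_right.2 hb.1.le, hs'] at h3
    exact (le_sup_left : gen m s' (γ b) ≤ _) (Box.mem_of_le (mem_gen_self _ _) ⟨h3, h1⟩)

lemma gen_le_of_node (β : Box m ≃o Box m) (γ : C ≃o C) (hD : ∀ y, β (D m y) = D m (γ y))
    {x b : C} {s s' : S} (hb : Node x b) (h : β (gen m s x) = gen m s' (γ x))
    (hs' : ¬ γ x ≤ m.thr s') : β (gen m s b) ≤ gen m s' (γ b) := by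
  rw [Box.le_def]
  rintro ⟨r, w⟩ hw
  have h1 : (r, w) ∈ D m (γ b) := by
    rw [← hD]; exact β.monotone (gen_mono le_top le_rfl) hw
  rcases mem_D.1 h1 with rfl | h1
  · exact Box.bot_left_mem _ _
  have key : ∀ w' ≤ γ x, (r, w') ∈ β (gen m s b) → (r, w') ∈ gen m s' (γ x) := by
    intro w' hw' h2
    rw [← h, ← inf_eq_right.2 hb.1.le, ← gen_inf_D, map_inf, hD]
    exact ⟨h2, mem_D.2 (Or.inr hw')⟩
  rcases (hb.map γ).2 w h1 with h2 | h2
  · exact gen_mono le_rfl (γ.monotone hb.1.le) (key w h2 hw)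
  · have h3 := key (γ x) le_rfl (Box.mem_of_le hw ⟨le_rfl, h2⟩)
    have h4 := (mem_gen.1 h3).1.resolve_right hs'
    exact Box.mem_of_le (mem_gen_self _ _) ⟨h4, h1⟩

lemma gen_eq_of_nodeHyp (β : Box m ≃o Box m) (γ : C ≃o C) (hD : ∀ y, β (D m y) = D m (γ y))
    {x : C} {s s' : S} (hx : NodeHyp x) (h : β (gen m s x) = gen m s' (γ x))
    (hs : ¬ x ≤ m.thr s) (hs' : ¬ γ x ≤ m.thr s') (y : C) :
    β (gen m s y) = gen m s' (γ y) := by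
  have hD' : ∀ y, β.symm (D m y) = D m (γ.symm y) := fun y => by
    rw [β.symm_apply_eq, hD, γ.apply_symm_apply]
  have node : ∀ b, Node x b → β (gen m s b) = gen m s' (γ b) := by
    intro b hb
    refine le_antisymm (gen_le_of_node β γ hD hb h hs') ?_
    have := gen_le_of_node β.symm γ.symm hD' (hb.map γ) (s := s') (s' := s)
      (by rw [β.symm_apply_eq, γ.symm_apply_apply, h]) (by rwa [γ.symm_apply_apply])
    rwa [β.symm_apply_le, γ.symm_apply_apply] at this
  obtain ⟨b, b', h1, h2, h3⟩ := hx.2 y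
  rw [← inf_eq_right.2 h3, ← gen_inf_D, ← gen_sup_right, map_inf, map_sup, node b h1, node b' h2, hD,
    gen_sup_right, gen_inf_D, map_inf, map_sup]

/-- Automorphisms act on the generators `gen s y` with `thr s` disjoint from a node `x` through
an action on `s` alone. -/
lemma exists_lin (β : Box m ≃o Box m) (γ : C ≃o C) (hD : ∀ y, β (D m y) = D m (γ y))
    {x : C} (hx : NodeHyp x) {s : S} (hs : m.thr s ⊓ x = ⊥) :
    ∃ s', m.thr s' ⊓ γ x = ⊥ ∧ ∀ y, β (gen m s y) = gen m s' (γ y) := by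
  by_cases hst : s = ⊤
  · subst hst
    exact ⟨⊤, by simp [m.thr_top], hD⟩
  have hD' : ∀ y, β.symm (D m y) = D m (γ.symm y) := fun y => by
    rw [β.symm_apply_eq, hD, γ.apply_symm_apply]
  have not_le : ∀ {z r}, z ≠ ⊥ → m.thr r ⊓ z = ⊥ → ¬ z ≤ m.thr r := fun hz h h' =>
    hz (by rwa [inf_eq_right.2 h'] at h)
  obtain ⟨b, -, hb, -, -⟩ := hx.2 ⊥
  obtain ⟨s', h1, h2⟩ := exists_row_bound β γ hD x s
  obtain ⟨s'', h3, h4⟩ := exists_row_bound β.symm γ.symm hD' (γ x) s'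
  have h4 := h4 _ (hb.map γ)
  rw [γ.symm_apply_apply] at h3 h4
  rw [γ.symm_apply_apply] at h4
  have h5 : gen m s'' x ≤ gen m s x := h3.trans (by rwa [β.symm_apply_le])
  have h6 : s'' ≤ s := (mem_gen.1 (gen_le.1 h5)).1.resolve_right (not_le hx.1 hs)
  have h7 : gen m s b ≤ gen m s'' b ⊔ D m x := by
    have h8 := β.symm.monotone (h2 b hb)
    rw [β.symm_apply_apply, map_sup, hD', γ.symm_apply_apply] at h8
    exact h8.trans (sup_le h4 le_sup_right)
  have h8 : InBox (s'', x ⊔ m.thr s'') (s, b) :=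
    Box.inBox_sup (H := gen m s'' b) (K := D m x) (q := (s'', x ⊔ m.thr s'')) le_sup_right
      (inBox_of_mem_gen le_sup_right (Or.inl le_rfl))
      (inBox_of_mem_gen le_sup_right (Or.inr le_sup_left)) _ (gen_le.1 h7)
  have h9 : s'' = s := by
    by_contra hne
    have hlt := lt_of_le_of_ne h6 hne
    have h10 : m.thr s'' = ⊥ := by
      by_contra h0
      exact hst (m.eq_top _ _ hlt h0)
    rcases h8 with h8 | h8
    · exact absurd h8 hlt.not_ge
    · simp only [h10, sup_bot_eq] at h8
      exact absurd h8 hb.1.not_ge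
  subst h9
  have h10 : β (gen m s'' x) = gen m s' (γ x) := by
    refine le_antisymm ?_ h1
    rwa [← β.le_symm_apply]
  have h11 : m.thr s' ⊓ γ x = ⊥ := by
    have h12 : D m (m.thr s' ⊓ γ x) ≤ gen m s' (γ x) :=
      D_le.2 (mem_gen.2 ⟨Or.inr inf_le_left, Or.inr inf_le_right⟩)
    rw [← h10, ← β.symm_apply_le, hD', D_le, mem_gen, top_le_iff] at h12
    have h13 := le_inf (h12.1.resolve_left hst) (h12.2.resolve_left top_ne_bot)
    rw [hs, le_bot_iff] at h13
    have h14 := congrArg γ h13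
    rwa [γ.apply_symm_apply, map_bot] at h14
  exact ⟨s', h11, gen_eq_of_nodeHyp β γ hD hx h10 (not_le hx.1 hs)
    (not_le (hx.map γ).1 h11)⟩

/-- The elements of `S` whose threshold is disjoint from `z`. -/
abbrev Reg (m : Marking S C) (z : C) := {s : S // m.thr s ⊓ z = ⊥}

lemma gen_le_gen {z : C} (hz : z ≠ ⊥) {s r : S} (hr : m.thr r ⊓ z = ⊥) :
    gen m s z ≤ gen m r z ↔ s ≤ r := by
  refine ⟨fun h => (mem_gen.1 (gen_le.1 h)).1.resolve_right fun h => hz ?_,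
    fun h => gen_mono h le_rfl⟩
  rwa [inf_eq_right.2 h] at hr

lemma exists_sigma (β : Box m ≃o Box m) (γ : C ≃o C) (hD : ∀ y, β (D m y) = D m (γ y))
    {x : C} (hx : NodeHyp x) :
    ∃ σ : Reg m x ≃o Reg m (γ x), ∀ s y, β (gen m s.1 y) = gen m (σ s).1 (γ y) := by
  have hD' : ∀ y, β.symm (D m y) = D m (γ.symm y) := fun y => by
    rw [β.symm_apply_eq, hD, γ.apply_symm_apply]
  have key : ∀ s : Reg m x, ∃ s' : Reg m (γ x), ∀ y, β (gen m s.1 y) = gen m s'.1 (γ y) :=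
    fun s => by
      obtain ⟨s', h, h'⟩ := exists_lin β γ hD hx s.2
      exact ⟨⟨s', h⟩, h'⟩
  have key' : ∀ s : Reg m (γ x), ∃ s' : Reg m x, ∀ y, β.symm (gen m s.1 y) = gen m s'.1 (γ.symm y) :=
    fun s => by
      obtain ⟨s', h, h'⟩ := exists_lin β.symm γ.symm hD' (hx.map γ) s.2
      rw [γ.symm_apply_apply] at h
      exact ⟨⟨s', h⟩, h'⟩
  choose f hf using key
  choose g hg using key'
  have inj : ∀ {z : C}, z ≠ ⊥ → ∀ {s r : Reg m z}, gen m s.1 z = gen m r.1 z → s = r := by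
    intro z hz s r h
    exact le_antisymm ((gen_le_gen hz r.2).1 h.le) ((gen_le_gen hz s.2).1 h.ge)
  refine ⟨⟨⟨f, g, fun s => ?_, fun s => ?_⟩, ?_⟩, hf⟩
  · apply inj hx.1
    have := hg (f s) (γ x)
    rw [← hf, β.symm_apply_apply, γ.symm_apply_apply] at this
    exact this.symm
  · apply inj (hx.map γ).1
    have := hf (g s) x
    rw [show gen m (g s).1 x = β.symm (gen m s.1 (γ x)) by rw [hg, γ.symm_apply_apply],
      β.apply_symm_apply] at this
    exact this.symm
  · intro s r
    change f s ≤ f r ↔ s ≤ r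
    rw [← Subtype.coe_le_coe, ← gen_le_gen (hx.map γ).1 (f r).2, ← hf, ← hf, β.le_iff_le,
      gen_le_gen hx.1 r.2]
    rfl

end Lin
end StrongInd

/-! ### Rigidity of the frame -/

namespace StrongInd

section Rigid

/-- `u` is a coatom of a partial order in which a greatest element is not assumed to exist. -/
def Coat {P : Type*} [PartialOrder P] (u : P) : Prop := ¬ IsTop u ∧ ∀ v, u < v → IsTop v

/-- An order-theoretic description of the elements `c k` of the frame: they lie below no coatom,
but some nonzero element below them does. -/
def IsChainElt {P : Type*} [PartialOrder P] (u : P) : Prop :=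
  ¬ IsTop u ∧ (∀ v, Coat v → ¬ u ≤ v) ∧ ∃ v ≤ u, ¬ IsBot v ∧ ∃ w, Coat w ∧ v ≤ w

variable {P P' : Type*} [PartialOrder P] [PartialOrder P']

lemma isTop_map (σ : P ≃o P') {u : P} : IsTop (σ u) ↔ IsTop u :=
  ⟨fun h v => σ.le_iff_le.1 (h _), fun h v => by rw [← σ.symm_apply_le]; exact h _⟩

lemma isBot_map (σ : P ≃o P') {u : P} : IsBot (σ u) ↔ IsBot u :=
  ⟨fun h v => σ.le_iff_le.1 (h _), fun h v => by rw [← σ.le_symm_apply]; exact h _⟩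

lemma Coat.map (σ : P ≃o P') {u : P} (h : Coat u) : Coat (σ u) := by
  refine ⟨fun h' => h.1 ((isTop_map σ).1 h'), fun v hv => ?_⟩
  rw [← isTop_map σ.symm]
  exact h.2 _ (by rwa [σ.lt_symm_apply])

lemma IsChainElt.map (σ : P ≃o P') {u : P} (h : IsChainElt u) : IsChainElt (σ u) := by
  obtain ⟨h1, h2, v, hv, hb, w, hw, hvw⟩ := h
  refine ⟨fun h' => h1 ((isTop_map σ).1 h'), fun v hv h => h2 _ (hv.map σ.symm) ?_,
    σ v, σ.monotone hv, fun h' => hb ((isBot_map σ).1 h'), σ w, hw.map σ, σ.monotone hvw⟩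
  rwa [σ.le_symm_apply]

variable {A J C : Type*} [Lattice A] [OrderBot A] [LinearOrder J] [Lattice C] [OrderBot C]
variable {t : J → C} {z : C}

/-- The base elements of the frame have zero threshold, so they are regular for every `z`. -/
def Reg.base (l : Skel A J) : Reg (Frame.marking t : Marking (Frame A J) C) z :=
  ⟨.base l, by simp⟩

lemma reg_isTop {s : Reg (Frame.marking t : Marking (Frame A J) C) z} :
    IsTop s ↔ s.1 = ⊤ := by
  refine ⟨fun h => top_le_iff.1 (h ⟨⊤, by rw [Marking.thr_top, bot_inf_eq]⟩), fun h v => ?_⟩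
  rw [← Subtype.coe_le_coe, h]
  exact le_top

lemma reg_isBot {s : Reg (Frame.marking t : Marking (Frame A J) C) z} :
    IsBot s ↔ s.1 = ⊥ := by
  refine ⟨fun h => le_bot_iff.1 (h (Reg.base ⊥)), fun h v => ?_⟩
  rw [← Subtype.coe_le_coe, h]
  exact bot_le

variable [Nonempty J] [NoMaxOrder J]

lemma exists_chain_gt (k : WithBot J) : ∃ k', k < k' := by
  induction k with
  | bot => exact ⟨(Classical.arbitrary J : J), WithBot.bot_lt_coe _⟩
  | coe j =>
    obtain ⟨j', h⟩ := exists_gt j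
    exact ⟨j', WithBot.coe_lt_coe.2 h⟩

lemma reg_coat {s : Reg (Frame.marking t : Marking (Frame A J) C) z} :
    Coat s ↔ ∃ l h, s.1 = Capped.cap l h := by
  constructor
  · rintro ⟨h1, h2⟩
    rw [reg_isTop] at h1
    obtain ⟨s, hs⟩ := s
    rcases s with l | ⟨l, h⟩ | _
    · exfalso
      have key : ∀ l', l ≤ l' → l ≠ l' → False := fun l' h h' => by
        have := h2 (Reg.base l') (lt_of_le_of_ne (Capped.base_le_base.2 h) fun e => h' (by
          have := congrArg Subtype.val e
          injection this))
        rw [reg_isTop] at this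
        exact Capped.base_ne_top _ this
      rcases l with x | j | k
      · exact key (.c ⊥) (by simp) (by rintro ⟨⟩)
      · exact key (.c j) (by simp) (by rintro ⟨⟩)
      · obtain ⟨k', hk⟩ := exists_chain_gt k
        exact key (.c k') (by simp [hk.le]) fun h => hk.ne (by injection h)
    · exact ⟨l, h, rfl⟩
    · exact absurd rfl h1
  · rintro ⟨l, h, hs⟩
    refine ⟨?_, fun v hv => ?_⟩
    · rw [reg_isTop, hs]; exact Capped.cap_ne_top _ _
    · rw [reg_isTop]
      rw [← Subtype.coe_lt_coe, hs] at hv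
      exact Capped.eq_top_of_cap_lt hv

variable [Nontrivial A]

lemma reg_isChainElt {s : Reg (Frame.marking t : Marking (Frame A J) C) z} :
    IsChainElt s ↔ ∃ k, s.1 = Frame.c k := by
  constructor
  · rintro ⟨h1, h2, v, hv, hb, w, hw, hvw⟩
    rw [reg_isTop] at h1
    rw [reg_isBot] at hb
    rw [reg_coat] at hw
    obtain ⟨l, hl, hw⟩ := hw
    rw [← Subtype.coe_le_coe] at hv
    rw [← Subtype.coe_le_coe, hw] at hvw
    obtain ⟨s, hs⟩ := s
    obtain ⟨v, hv'⟩ := v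
    rcases s with (x | j | k) | ⟨l', h⟩ | _
    · exact absurd (Capped.base_le_cap.2 le_rfl)
        (h2 ⟨Frame.a' x, by simp⟩ (reg_coat.2 ⟨_, _, rfl⟩))
    · exfalso
      -- a nonzero element below `p j` is `p j` itself, so the only candidate coatom is `p' j`
      rcases v with (x | i | k) | ⟨l', h⟩ | _
      · simp only [Capped.base_le_base, Skel.a_le_p] at hv
        subst hv; exact hb rfl
      · simp only [Capped.base_le_base, Skel.p_le_p] at hv
        subst hv
        exact h2 w (reg_coat.2 ⟨l, hl, hw⟩) (by rw [← Subtype.coe_le_coe, hw]; exact hvw)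
      · simp at hv
      · simp at hv
      · exact Capped.top_le_base hv
    · exact ⟨k, rfl⟩
    · exact absurd le_rfl (h2 ⟨.cap l' h, hs⟩ (reg_coat.2 ⟨_, _, rfl⟩))
    · exact absurd rfl h1
  · rintro ⟨k, hk⟩
    obtain ⟨x, hx⟩ := exists_ne (⊥ : A)
    refine ⟨?_, ?_, Reg.base (.a x), ?_, ?_, ⟨Frame.a' x, by simp⟩, reg_coat.2 ⟨_, _, rfl⟩, ?_⟩
    · rw [reg_isTop, hk]; exact Capped.base_ne_top _
    · intro v hv h
      rw [reg_coat] at hv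
      obtain ⟨l, hl, hv⟩ := hv
      rw [← Subtype.coe_le_coe, hk, hv, Capped.base_le_cap] at h
      rcases l with x | j | k'
      · simp at h
      · simp at h
      · exact hl k' rfl
    · rw [← Subtype.coe_le_coe, hk]; exact Capped.base_le_base.2 (by simp)
    · rw [reg_isBot]; intro h; injection h with h; injection h with h; exact hx h
    · exact Capped.base_le_cap.2 le_rfl

variable [WellFoundedLT J] {z' : C}

lemma sigma_c (σ : Reg (Frame.marking t : Marking (Frame A J) C) z ≃o
      Reg (Frame.marking t : Marking (Frame A J) C) z') (k : WithBot J) :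
    (σ (Reg.base (.c k))).1 = Frame.c k := by
  have key : ∀ {z z' : C} (σ : Reg (Frame.marking t : Marking (Frame A J) C) z ≃o
      Reg (Frame.marking t : Marking (Frame A J) C) z') (k : WithBot J),
      ∃ k', σ (Reg.base (.c k)) = Reg.base (.c k') := fun σ k => by
    obtain ⟨k', h⟩ := reg_isChainElt.1 ((reg_isChainElt.2 ⟨k, rfl⟩ :
      IsChainElt (Reg.base (.c k))).map σ)
    exact ⟨k', Subtype.ext h⟩
  have inj : ∀ {z : C} {k k' : WithBot J},
      (Reg.base (.c k) : Reg (Frame.marking t : Marking (Frame A J) C) z) ≤ Reg.base (.c k') ↔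
        k ≤ k' := Iff.rfl
  choose f hf using key σ
  choose g hg using key σ.symm
  let e : WithBot J ≃o WithBot J := ⟨⟨f, g,
    fun k => by
      have h := hg (f k)
      rw [← hf, σ.symm_apply_apply] at h
      exact le_antisymm (inj.1 h.ge) (inj.1 h.le),
    fun k => by
      have h := hf (g k)
      rw [← hg, σ.apply_symm_apply] at h
      exact le_antisymm (inj.1 h.ge) (inj.1 h.le)⟩, by
    intro k k'
    change f k ≤ f k' ↔ k ≤ k'
    rw [← inj (z := z'), ← hf, ← hf, σ.le_iff_le, inj]⟩
  have he : e = OrderIso.refl _ := Subsingleton.elim _ _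
  have : f k = k := congrArg (fun e : WithBot J ≃o WithBot J => e k) he
  rw [hf, this]
  rfl

lemma sigma_not_c (σ : Reg (Frame.marking t : Marking (Frame A J) C) z ≃o
      Reg (Frame.marking t : Marking (Frame A J) C) z') {l : Skel A J} (hl : HasCap l)
    (k : WithBot J) : (σ (Reg.base l)).1 ≠ Frame.c k := by
  intro h
  rw [← sigma_c σ k] at h
  have := σ.injective (Subtype.ext h)
  have := congrArg Subtype.val this
  injection this with this
  exact hl k this

lemma sigma_p (σ : Reg (Frame.marking t : Marking (Frame A J) C) z ≃o
      Reg (Frame.marking t : Marking (Frame A J) C) z') (j : J) :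
    (σ (Reg.base (.p j))).1 = Frame.p j := by
  have h1 : ∀ k : WithBot J, (σ (Reg.base (.p j))).1 ≤ Frame.c k ↔ (j : WithBot J) ≤ k := by
    intro k
    rw [← sigma_c σ k, Subtype.coe_le_coe, σ.le_iff_le]
    exact Iff.rfl
  have h2 := sigma_not_c σ (hasCap_p j)
  generalize (σ (Reg.base (.p j))).1 = u at h1 h2
  rcases u with (x | i | k) | ⟨l', h⟩ | _
  · have := h1 ⊥
    simp at this
  · have h3 := h1 i
    have h4 := h1 j
    simp at h3 h4
    rw [le_antisymm h4 h3]
  · exact absurd rfl (h2 k)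
  · have := h1 j
    simp at this
  · exact absurd ((h1 j).2 le_rfl) Capped.top_le_base

lemma sigma_a (σ : Reg (Frame.marking t : Marking (Frame A J) C) z ≃o
      Reg (Frame.marking t : Marking (Frame A J) C) z') (x : A) :
    ∃ x', (σ (Reg.base (.a x))).1 = Frame.a x' := by
  have h1 : (σ (Reg.base (.a x))).1 ≤ Frame.c ⊥ := by
    rw [← sigma_c σ ⊥, Subtype.coe_le_coe, σ.le_iff_le]
    exact Capped.base_le_base.2 (by simp)
  have h2 := sigma_not_c σ (hasCap_a x)
  generalize (σ (Reg.base (.a x))).1 = u at h1 h2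
  rcases u with (x | i | k) | ⟨l', h⟩ | _
  · exact ⟨x, rfl⟩
  · simp at h1
  · exact absurd rfl (h2 k)
  · simp at h1
  · exact absurd h1 Capped.top_le_base

/-- The threshold `t j` is determined by the order and the elements `gen (p j) y`, `gen (c j) y`
and `D y`. -/
lemma le_t_iff {j : J} {y : C} : y ≤ t j ↔
    ¬ ∃ h : Box (Frame.marking t : Marking (Frame A J) C), gen _ (Frame.p j) y ≤ h ∧ h ≤ D _ y ∧
      h ≠ D _ y ∧ h ⊔ gen _ (Frame.c j) y = D _ y := by
  rw [← not_iff_not, not_not]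
  constructor
  · intro hy
    refine ⟨gen _ (Frame.p' j) y, gen_mono (Capped.base_le_cap.2 le_rfl) le_rfl,
      gen_mono le_top le_rfl, fun h => hy ?_, ?_⟩
    · have := mem_gen.1 (D_le.1 h.ge)
      exact this.1.resolve_left Capped.top_le_cap
    · rw [gen_sup_left, Capped.cap_sup_base _ (by simp)]; rfl
  · rintro ⟨h, h1, h2, h3, h4⟩ hy
    have h5 : (⊤, y) ∉ h := fun h5 => h3 (le_antisymm h2 (D_le.2 h5))
    obtain ⟨⟨α, δ⟩, hq, hqh, hqy⟩ := Box.exists_sep h5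
    simp only [InBox, not_or] at hqy
    have h6 : Frame.p j ≤ α := (hqh _ (gen_le.1 h1)).resolve_right hqy.2
    rcases α with l | ⟨l, hl⟩ | _
    · have h7 := Box.inBox_sup (H := h) (K := gen _ (Frame.c j) y)
        (q := (.base (l ⊔ .c j), δ)) (by simp)
        (fun p hp => (hqh p hp).mono (Capped.base_le_base.2 le_sup_left) le_rfl)
        (inBox_of_mem_gen (by simp) (Or.inl (Capped.base_le_base.2 le_sup_right)))
        (⊤, y) (by rw [h4]; exact mem_gen_self _ _)
      rcases h7 with h7 | h7
      · exact Capped.top_le_base h7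
      · exact hqy.2 h7
    · rcases l with x | i | k
      · simp at h6
      · simp only [Capped.base_le_cap, Skel.p_le_p] at h6
        subst h6
        exact hqy.2 (hy.trans hq)
      · exact hl k rfl
    · exact hqy.1 le_rfl

/-- Automorphisms of the box lattice fix the constants and the generators over `p j` and `c k`, and
act on the generators over `A` through the first coordinate only. -/
lemma exists_action (hbig : BigHyp A J C) (q : J → J) (hq : Function.Injective q)
    (ht : ∀ i, t (q i) = ⊥) (hsurj : Function.Surjective t) {x : C} (hx : NodeHyp x)
    (β : Box (Frame.marking t : Marking (Frame A J) C) ≃o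
      Box (Frame.marking t : Marking (Frame A J) C)) :
    (∀ a : A, ∃ a', ∀ y, β (gen _ (Frame.a a) y) = gen _ (Frame.a a') y) ∧
    (∀ j y, β (gen _ (Frame.p j) y) = gen _ (Frame.p j) y) ∧
    (∀ k y, β (gen _ (Frame.c k) y) = gen _ (Frame.c k) y) ∧
    (∀ y, β (D _ y) = D _ y) := by
  obtain ⟨γ, hD⟩ := exists_gamma hbig q hq ht β
  obtain ⟨σ, hσ⟩ := exists_sigma β γ hD hx
  have hc : ∀ k y, β (gen _ (Frame.c k) y) = gen _ (Frame.c k) (γ y) := fun k y => by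
    have h := hσ (Reg.base (.c k)) y
    rwa [sigma_c] at h
  have hp : ∀ j y, β (gen _ (Frame.p j) y) = gen _ (Frame.p j) (γ y) := fun j y => by
    have h := hσ (Reg.base (.p j)) y
    rwa [sigma_p] at h
  have hle : ∀ j y, y ≤ t j ↔ γ y ≤ t j := by
    intro j y
    rw [le_t_iff (A := A), le_t_iff (A := A), not_iff_not]
    refine ⟨?_, ?_⟩
    · rintro ⟨h, h1, h2, h3, h4⟩
      refine ⟨β h, ?_, ?_, ?_, ?_⟩
      · rw [← hp]; exact β.monotone h1
      · rw [← hD]; exact β.monotone h2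
      · rw [← hD]; exact fun h => h3 (β.injective h)
      · rw [← hD, ← h4, map_sup, hc]
    · rintro ⟨h, h1, h2, h3, h4⟩
      refine ⟨β.symm h, ?_, ?_, ?_, ?_⟩
      · rwa [β.le_symm_apply, hp]
      · rwa [β.symm_apply_le, hD]
      · rwa [Ne, β.symm_apply_eq, hD]
      · apply β.injective
        rw [map_sup, β.apply_symm_apply, hc, hD, h4]
  have hγ : ∀ y, γ y = y := by
    intro y
    obtain ⟨j, hj⟩ := hsurj y
    obtain ⟨j', hj'⟩ := hsurj (γ y)
    apply le_antisymm
    · rw [← hj, ← hle, hj]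
    · rw [← hj', hle, hj']
  simp only [hγ] at hc hp hD
  refine ⟨fun a => ?_, hp, hc, hD⟩
  obtain ⟨a', ha'⟩ := sigma_a σ a
  refine ⟨a', fun y => ?_⟩
  have h := hσ (Reg.base (.a a)) y
  rwa [ha', hγ] at h

end Rigid
end StrongInd

/-! ### The automorphism-preserving embedding -/

namespace StrongInd

section MapIso

variable {S C : Type*} [Lattice S] [BoundedOrder S] [Lattice C] [OrderBot C] {m : Marking S C}

lemma isElt_map (e : S ≃o S) (he : ∀ s, m.thr (e s) = m.thr s) (H : Box m) :
    IsElt m {p | (e.symm p.1, p.2) ∈ H} := by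
  obtain ⟨B, hB, ⟨b, hb⟩, hH⟩ := H.2
  refine ⟨B.map fun q => (e q.1, q.2), ?_, ⟨b, List.mem_map.2 ⟨_, hb, by simp⟩⟩, fun p => ?_⟩
  · intro q hq
    obtain ⟨q', hq', rfl⟩ := List.mem_map.1 hq
    simpa only [he] using hB q' hq'
  · refine (hH _).trans ?_
    simp only [List.forall_mem_map, InBox, e.symm_apply_le]

/-- The automorphism of the box lattice induced by a threshold-preserving automorphism of `S`. -/
def Box.mapIso (e : S ≃o S) (he : ∀ s, m.thr (e s) = m.thr s) : Box m ≃o Box m where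
  toFun H := ⟨{p | (e.symm p.1, p.2) ∈ H}, isElt_map e he H⟩
  invFun H := ⟨{p | (e p.1, p.2) ∈ H},
    isElt_map e.symm (fun s => by rw [← he, e.apply_symm_apply]) H⟩
  left_inv H := Box.ext fun p => by
    change (e.symm (e p.1), p.2) ∈ H ↔ _
    rw [e.symm_apply_apply]
  right_inv H := Box.ext fun p => by
    change (e (e.symm p.1), p.2) ∈ H ↔ _
    rw [e.apply_symm_apply]
  map_rel_iff' {H K} := by
    constructor
    · intro h p hp
      have : (e.symm (e p.1), p.2) ∈ K := by
        refine h (a := (e p.1, p.2)) ?_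
        change (e.symm (e p.1), p.2) ∈ H
        rwa [e.symm_apply_apply]
      rwa [e.symm_apply_apply] at this
    · exact fun h p hp => h hp

lemma Box.mem_mapIso {e : S ≃o S} {he : ∀ s, m.thr (e s) = m.thr s} {H : Box m} {p : S × C} :
    p ∈ Box.mapIso e he H ↔ (e.symm p.1, p.2) ∈ H := Iff.rfl

lemma Box.mapIso_gen (e : S ≃o S) (he : ∀ s, m.thr (e s) = m.thr s) (s : S) (y : C) :
    Box.mapIso e he (gen m s y) = gen m (e s) y := by
  apply Box.ext
  rintro ⟨r, w⟩
  rw [Box.mem_mapIso, mem_gen, mem_gen, e.symm_apply_le, he]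
  simp

lemma le_map_of_gen (β : Box m ≃o Box m) (h : ∀ s y, gen m s y ≤ β (gen m s y)) (H : Box m) :
    H ≤ β H := by
  obtain ⟨l, rfl⟩ := H.exists_eq_cl
  refine cl_le.2 fun p hp => gen_le.1 ?_
  exact (h p.1 p.2).trans (β.monotone (gen_le.2 (mem_cl_of_mem hp)))

end MapIso

section Auto

variable {A J C : Type*} [Lattice A] [OrderBot A] [LinearOrder J] [Lattice C] [OrderBot C]
variable {t : J → C}

/-- The action on the skeleton of a map of `A`. -/
def Skel.mapA (α : A → A) : Skel A J → Skel A J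
  | .a x => .a (α x)
  | .p j => .p j
  | .c k => .c k

lemma HasCap.mapA {α : A → A} {l : Skel A J} (h : HasCap l) : HasCap (l.mapA α) := by
  rcases l with x | j | k
  · exact hasCap_a _
  · exact hasCap_p _
  · exact absurd rfl (h k)

/-- The action on the frame of a map of `A`. -/
def Frame.mapA (α : A → A) : Frame A J → Frame A J
  | .base l => .base (l.mapA α)
  | .cap l h => .cap (l.mapA α) h.mapA
  | .top => .top

lemma Skel.mapA_le (α : A ≃o A) {l l' : Skel A J} : l.mapA α ≤ l'.mapA α ↔ l ≤ l' := by
  rcases l with x | i | k <;> rcases l' with y | j | k' <;> simp [Skel.mapA]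

lemma Skel.mapA_mapA {α α' : A → A} (h : ∀ x, α (α' x) = x) (l : Skel A J) :
    (l.mapA α').mapA α = l := by
  rcases l with x | i | k <;> simp [Skel.mapA, h]

lemma Frame.mapA_mapA {α α' : A → A} (h : ∀ x, α (α' x) = x) (s : Frame A J) :
    Frame.mapA α (Frame.mapA α' s) = s := by
  rcases s with l | ⟨l, hl⟩ | _
  · simp [Frame.mapA, Skel.mapA_mapA h]
  · simp [Frame.mapA, Skel.mapA_mapA h]
  · rfl

/-- The automorphism of the frame induced by an automorphism of `A`. -/
def Frame.mapIso (α : A ≃o A) : Frame A J ≃o Frame A J where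
  toFun := Frame.mapA α
  invFun := Frame.mapA α.symm
  left_inv := Frame.mapA_mapA α.symm_apply_apply
  right_inv := Frame.mapA_mapA α.apply_symm_apply
  map_rel_iff' {s r} := by
    change Frame.mapA α s ≤ Frame.mapA α r ↔ _
    have inj : ∀ l l' : Skel A J, l.mapA α = l'.mapA α ↔ l = l' := fun l l' => by
      simp only [le_antisymm_iff, Skel.mapA_le]
    rcases s with l | ⟨l, hl⟩ | _ <;> rcases r with l' | ⟨l', hl'⟩ | _ <;>
      simp [Frame.mapA, Skel.mapA_le, inj]

lemma Frame.thr_mapIso (α : A ≃o A) (s : Frame A J) :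
    (Frame.marking t).thr (Frame.mapIso α s) = (Frame.marking t).thr s := by
  rcases s with l | ⟨x | j | k, hl⟩ | _ <;> rfl

/-- An automorphism fixing the generators over base elements also fixes those over caps: the cap
over `l` joins to `⊤` with every base element that is not below `l`. -/
lemma gen_le_of_fix (β : Box (Frame.marking t : Marking (Frame A J) C) ≃o
      Box (Frame.marking t : Marking (Frame A J) C))
    (hD : ∀ y, β (D _ y) = D _ y) (hb : ∀ l y, β (gen _ (.base l) y) = gen _ (.base l) y)
    (s : Frame A J) (y : C) : gen _ s y ≤ β (gen _ s y) := by
  rcases s with l | ⟨l, hl⟩ | _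
  · exact (hb l y).ge
  · have key : ∀ r, ¬ r ≤ l → β (gen _ (.cap l hl) y) ⊔ gen _ (.base r) y = D _ y := by
      intro r hr
      rw [← hb, ← map_sup, gen_sup_left, Capped.cap_sup_base _ hr]
      exact hD y
    rw [gen_le]
    by_contra hcon
    obtain ⟨⟨α, δ⟩, hq, hqh, hqy⟩ := Box.exists_sep hcon
    simp only [InBox, not_or] at hqy
    have h1 : gen _ (.base l) y ≤ β (gen _ (.cap l hl) y) := by
      rw [← hb]; exact β.monotone (gen_mono (Capped.base_le_cap.2 le_rfl) le_rfl)
    have h2 : .base l ≤ α := (hqh _ (gen_le.1 h1)).resolve_right hqy.2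
    -- no allowed box `(α', δ)` with `α ≤ α' ≠ ⊤` can contain `gen r y` for a base `r` outside `l`
    have excl : ∀ α' r, α ≤ α' → α' ≠ ⊤ → (Frame.marking t).thr α' ≤ δ → ¬ r ≤ l →
        Capped.base r ≤ α' → False := by
      intro α' r h3 h4 h5 h6 h7
      have h8 := Box.inBox_sup (q := (α', δ)) h5 (fun p hp => (hqh p hp).mono h3 le_rfl)
        (inBox_of_mem_gen h5 (Or.inl h7)) (⊤, y) (by rw [key r h6]; exact mem_gen_self _ _)
      rcases h8 with h8 | h8
      · exact h4 (top_le_iff.1 h8)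
      · exact hqy.2 h8
    rcases α with l' | ⟨l', hl'⟩ | _
    · refine excl (.base (l' ⊔ .c ⊥)) (.c ⊥) (Capped.base_le_base.2 le_sup_left)
        (Capped.base_ne_top _) (by simp) ?_ (Capped.base_le_base.2 le_sup_right)
      rcases l with x | j | k
      · simp
      · simp
      · exact absurd rfl (hl k)
    · refine excl _ l' le_rfl (Capped.cap_ne_top _ _) hq (fun h3 => hqy.1 ?_)
        (Capped.base_le_cap.2 le_rfl)
      exact Capped.cap_le_cap.2 (le_antisymm (Capped.base_le_cap.1 h2) h3)
    · exact hqy.1 (Capped.le_top' _)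
  · exact (hD y).ge

lemma eq_refl_of_fix (β : Box (Frame.marking t : Marking (Frame A J) C) ≃o
      Box (Frame.marking t : Marking (Frame A J) C))
    (hD : ∀ y, β (D _ y) = D _ y) (hb : ∀ l y, β (gen _ (.base l) y) = gen _ (.base l) y)
    (H : Box (Frame.marking t : Marking (Frame A J) C)) : β H = H := by
  apply le_antisymm
  · have := le_map_of_gen β.symm (gen_le_of_fix β.symm (fun y => by rw [β.symm_apply_eq, hD])
      fun l y => by rw [β.symm_apply_eq, hb]) H
    rwa [β.le_symm_apply] at this
  · exact le_map_of_gen β (gen_le_of_fix β hD hb) H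

/-- The order isomorphism underlying a lattice automorphism. -/
noncomputable def isoOfAuto {L : Type*} [Lattice L] {h : L → L} (hh : IsLatAuto L h) : L ≃o L where
  toEquiv := Equiv.ofBijective h hh.1
  map_rel_iff' {x y} := by
    change h x ≤ h y ↔ _
    rw [← sup_eq_right, ← hh.2.1, hh.1.1.eq_iff, sup_eq_right]

lemma isoOfAuto_apply {L : Type*} [Lattice L] {h : L → L} (hh : IsLatAuto L h) (x : L) :
    isoOfAuto hh x = h x := rfl

lemma isLatAuto_iso {L : Type*} [Lattice L] (e : L ≃o L) : IsLatAuto L e :=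
  ⟨e.bijective, fun _ _ => map_sup e _ _, fun _ _ => map_inf e _ _⟩

variable [Nonempty J] [NoMaxOrder J] [Nontrivial A] [WellFoundedLT J]

/-- The embedding of `A` at the node `x` is automorphism-preserving. -/
theorem apEmb_gen (hbig : BigHyp A J C) (q : J → J) (hq : Function.Injective q)
    (ht : ∀ i, t (q i) = ⊥) (hsurj : Function.Surjective t) {x : C} (hx : NodeHyp x) :
    APEmb A (Box (Frame.marking t : Marking (Frame A J) C))
      fun a => gen _ (Frame.a a) x := by
  have le : ∀ a a' : A, gen (Frame.marking t) (Frame.a a) x ≤ gen _ (Frame.a a') x ↔ a ≤ a' := by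
    intro a a'
    rw [gen_le_gen hx.1 (by simp)]
    exact Iff.rfl
  have inj : ∀ a a' : A, gen (Frame.marking t) (Frame.a a) x = gen _ (Frame.a a') x → a = a' :=
    fun a a' h => le_antisymm ((le _ _).1 h.le) ((le _ _).1 h.ge)
  have act := exists_action (A := A) hbig q hq ht hsurj hx
  refine ⟨inj, ?_, ?_, ?_, ?_⟩
  · intro a a'
    exact (gen_sup_left (m := Frame.marking t) (Frame.a a) (Frame.a a') x).symm
  · intro a a'
    exact (gen_inf_gen (m := Frame.marking t) (s := Frame.a a) (t := Frame.a a') rfl rfl x).symm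
  · intro α hα
    let μ : Box (Frame.marking t : Marking (Frame A J) C) ≃o Box (Frame.marking t) :=
      Box.mapIso (Frame.mapIso (isoOfAuto hα)) (Frame.thr_mapIso (t := t) (isoOfAuto hα))
    have hμ : ∀ a, μ (gen _ (Frame.a a) x) = gen _ (Frame.a (α a)) x :=
      fun a => Box.mapIso_gen _ _ _ _
    refine ⟨μ, ⟨isLatAuto_iso _, hμ⟩, ?_⟩
    rintro β ⟨hβ, hβα⟩
    have hfix := eq_refl_of_fix ((isoOfAuto hβ).trans μ.symm) (act _).2.2.2 (by
      intro l y
      rcases l with a | j | k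
      · obtain ⟨a', ha'⟩ := (act ((isoOfAuto hβ).trans μ.symm)).1 a
        have h1 := ha' x
        rw [OrderIso.trans_apply, isoOfAuto_apply, hβα, μ.symm_apply_eq, hμ] at h1
        have h2 : a' = a := hα.1.1 (inj _ _ h1).symm
        rw [ha', h2]
      · exact (act _).2.1 j y
      · exact (act _).2.2.1 k y)
    funext H
    have := hfix H
    rw [OrderIso.trans_apply, μ.symm_apply_eq, isoOfAuto_apply] at this
    exact this
  · intro β hβ
    choose f hf using (act (isoOfAuto hβ)).1
    choose g hg using (act (isoOfAuto hβ).symm).1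
    refine ⟨f, ?_, fun a => hf a x⟩
    let e : A ≃o A := ⟨⟨f, g, fun a => inj _ _ (by rw [← hg, ← hf, OrderIso.symm_apply_apply]),
      fun a => inj _ _ (by rw [← hf, ← hg, OrderIso.apply_symm_apply])⟩, by
      intro a a'
      change f a ≤ f a' ↔ _
      rw [← le, ← hf, ← hf, OrderIso.le_iff_le, le]⟩
    exact isLatAuto_iso e

end Auto
end StrongInd

/-! ### Size of the index set and conclusion -/

namespace StrongInd

section Size

open Cardinal

/-- Below a proper element of the frame there are, apart from `A`, only elements indexed by an
initial segment of `J`. -/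
lemma Frame.exists_bound {A J : Type*} [Lattice A] [OrderBot A] [LinearOrder J] [Nonempty J]
    {α : Frame A J} (hα : α ≠ ⊤) : ∃ j : J, ∀ s ≤ α,
      s = α ∨ s = Frame.c ⊥ ∨ (∃ x, s = Frame.a x) ∨ (∃ i ≤ j, s = Frame.p i) ∨
        ∃ i ≤ j, s = Frame.c (i : J) := by
  have key : ∀ l : Skel A J, ∃ j : J, ∀ l' ≤ l, l' = .c ⊥ ∨ (∃ x, l' = .a x) ∨
      (∃ i ≤ j, l' = .p i) ∨ ∃ i ≤ j, l' = .c (i : J) := by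
    intro l
    have h : ∃ j : J, l ≤ .c j := by
      rcases l with x | i | k
      · exact ⟨Classical.arbitrary J, by simp⟩
      · exact ⟨i, by simp⟩
      · induction k with
        | bot => exact ⟨Classical.arbitrary J, by simp⟩
        | coe i => exact ⟨i, le_rfl⟩
    obtain ⟨j, hj⟩ := h
    refine ⟨j, fun l' hl' => ?_⟩
    replace hj := hl'.trans hj
    rcases l' with x | i | k
    · exact Or.inr (Or.inl ⟨x, rfl⟩)
    · exact Or.inr (Or.inr (Or.inl ⟨i, by simpa using hj, rfl⟩))
    · induction k with
      | bot => exact Or.inl rfl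
      | coe i => exact Or.inr (Or.inr (Or.inr ⟨i, by simpa using hj, rfl⟩))
  have key2 : ∃ l : Skel A J, ∀ s ≤ α, s = α ∨ ∃ l' ≤ l, s = .base l' := by
    rcases α with l | ⟨l, hl⟩ | _
    · refine ⟨l, fun s hs => Or.inr ?_⟩
      rcases s with l' | ⟨l', hl'⟩ | _
      · exact ⟨l', by simpa using hs, rfl⟩
      · simp at hs
      · exact absurd hs Capped.top_le_base
    · refine ⟨l, fun s hs => ?_⟩
      rcases s with l' | ⟨l', hl'⟩ | _
      · exact Or.inr ⟨l', by simpa using hs, rfl⟩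
      · rw [Capped.cap_le_cap] at hs
        subst hs
        exact Or.inl rfl
      · exact absurd hs Capped.top_le_cap
    · exact absurd rfl hα
  obtain ⟨l, hl⟩ := key2
  obtain ⟨j, hj⟩ := key l
  refine ⟨j, fun s hs => (hl s hs).imp id ?_⟩
  rintro ⟨l', hl', rfl⟩
  rcases hj l' hl' with rfl | ⟨x, rfl⟩ | ⟨i, hi, rfl⟩ | ⟨i, hi, rfl⟩
  · exact Or.inl rfl
  · exact Or.inr (Or.inl ⟨x, rfl⟩)
  · exact Or.inr (Or.inr (Or.inl ⟨i, hi, rfl⟩))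
  · exact Or.inr (Or.inr (Or.inr ⟨i, hi, rfl⟩))

lemma bigHyp_of_card {A J C : Type u} [Lattice A] [OrderBot A] [LinearOrder J] [Nonempty J]
    (ν : Cardinal.{u}) (hν : ℵ₀ ≤ ν) (hA : #A ≤ ν) (hC : #C ≤ ν) (hJ : ν < #J)
    (hIic : ∀ j : J, #(Set.Iic j) ≤ ν) : BigHyp A J C := by
  intro α hα F hF
  have hcard : #(Set.Iic α) ≤ ν := by
    obtain ⟨j, hj⟩ := Frame.exists_bound hα
    have hsub : Set.Iic α ⊆ ({α} ∪ {Frame.c ⊥}) ∪ Set.range Frame.a ∪ (Frame.p '' Set.Iic j) ∪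
        ((fun i : J => Frame.c (i : WithBot J)) '' Set.Iic j) := by
      intro s hs
      rcases hj s hs with rfl | rfl | ⟨x, rfl⟩ | ⟨i, hi, rfl⟩ | ⟨i, hi, rfl⟩
      · simp
      · simp
      · simp
      · exact Or.inl (Or.inr ⟨i, hi, rfl⟩)
      · exact Or.inr ⟨i, hi, rfl⟩
    have one : (1 : Cardinal.{u}) ≤ ν := one_le_aleph0.trans hν
    have hunion : ∀ {X Y : Set (Frame A J)}, #X ≤ ν → #Y ≤ ν → #(X ∪ Y : Set _) ≤ ν := fun h1 h2 =>
      (mk_union_le _ _).trans (add_le_of_le hν h1 h2)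
    refine (mk_le_mk_of_subset hsub).trans (hunion (hunion (hunion (hunion ?_ ?_) ?_) ?_) ?_)
    · rwa [mk_singleton]
    · rwa [mk_singleton]
    · exact mk_range_le.trans hA
    · exact mk_image_le.trans (hIic j)
    · exact mk_image_le.trans (hIic j)
  have hU : #(⋃ s ∈ Set.Iic α, F s : Set J) ≤ ν := by
    refine (mk_biUnion_le _ _).trans ((mul_le_mul' hcard (ciSup_le' fun s => ?_)).trans
      (mul_eq_self hν).le)
    obtain ⟨φ, hφ⟩ := hF s
    exact (mk_le_of_injective hφ).trans hC
  have : Infinite J := infinite_iff.2 (hν.trans hJ.le)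
  have hc := mk_compl_of_infinite _ (hU.trans_lt hJ)
  have h2 : 2 ≤ #((⋃ s ∈ Set.Iic α, F s)ᶜ : Set J) := by
    rw [hc]; exact (ofNat_le_aleph0 (n := 2)).trans (hν.trans hJ.le)
  obtain ⟨i, j, hij⟩ := two_le_iff.1 h2
  refine ⟨i, j, fun h => hij (Subtype.ext h), fun s hs => ⟨fun h => i.2 ?_, fun h => j.2 ?_⟩⟩
  · exact Set.mem_biUnion hs h
  · exact Set.mem_biUnion hs h

/-- A well-order meeting all the size requirements of the construction exists. -/
lemma exists_index (A C : Type u) [Lattice A] [OrderBot A] [Nonempty C] (c0 : C) :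
    ∃ (J : Type u) (_ : LinearOrder J) (_ : Nonempty J) (_ : NoMaxOrder J) (_ : WellFoundedLT J)
      (t : J → C) (q : J → J), BigHyp A J C ∧ Function.Injective q ∧ (∀ i, t (q i) = c0) ∧
        Function.Surjective t := by
  let ν : Cardinal.{u} := max ℵ₀ (max #A #C)
  have hν : ℵ₀ ≤ ν := le_max_left _ _
  have hA : #A ≤ ν := (le_max_left _ _).trans (le_max_right _ _)
  have hC : #C ≤ ν := (le_max_right _ _).trans (le_max_right _ _)
  let J := (Order.succ ν).ord.ToType
  have hJ : #J = Order.succ ν := mk_ord_toType _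
  have hνJ : ν < #J := by rw [hJ]; exact Order.lt_succ ν
  have hJ0 : ℵ₀ ≤ #J := hν.trans hνJ.le
  have : Infinite J := infinite_iff.2 hJ0
  have : NoMaxOrder J := Cardinal.noMaxOrder (hν.trans (Order.le_succ ν))
  have hIic : ∀ j : J, #(Set.Iic j) ≤ ν := by
    intro j
    obtain ⟨j', hj'⟩ := exists_gt j
    exact (mk_le_mk_of_subset fun i hi => lt_of_le_of_lt hi hj').trans
      (Order.lt_succ_iff.1 ((mk_Iio_lt j' (by rw [hJ]; simp [J])).trans_eq hJ))
  have hprod : #J = #(J × C) := by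
    rw [mk_prod, lift_id, lift_id, mul_eq_left hJ0 (hC.trans hνJ.le) (mk_ne_zero C)]
  obtain ⟨e⟩ := Cardinal.eq.1 hprod
  refine ⟨J, inferInstance, inferInstance, inferInstance, inferInstance, fun j => (e j).2,
    fun j => e.symm (j, c0), bigHyp_of_card ν hν hA hC hνJ hIic, ?_, ?_, ?_⟩
  · intro i j h
    exact congrArg Prod.fst (e.symm.injective h)
  · intro i; simp
  · intro c
    exact ⟨e.symm (Classical.arbitrary J, c), by simp⟩

end Size

/-- The theorem for nontrivial `La`. -/
lemma exists_of_nontrivial (La Lc : Type u) [Lattice La] [OrderBot La] [Lattice Lc] [OrderBot Lc]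
    [Nontrivial La] [Nontrivial Lc] :
    ∃ (L : Type u) (_ : Lattice L) (f : La → L) (g : Lc → L), StrongIndWitness₀ La Lc L f g := by
  obtain ⟨c, hc⟩ := exists_ne (⊥ : Lc)
  let x : Box (mT Lc) := gen (mT Lc) t0 c
  have hx0 : x ≠ ⊥ := fun h => by
    have := mem_bot.1 (h ▸ mem_gen_self t0 c : (t0, c) ∈ (⊥ : Box (mT Lc)))
    exact this.elim t0_ne_bot hc
  have hxy : x < D (mT Lc) c := by
    refine lt_of_le_of_ne (gen_mono le_top le_rfl) fun h => ?_
    have h1 := (mem_gen.1 (D_le.1 h.ge)).1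
    rw [mT_thr, le_bot_iff, top_le_iff] at h1
    exact h1.elim t0_ne_top hc
  have hnode : NodeHyp (Glue.low x x) :=
    ⟨fun h => hx0 (Glue.low_injective (h.trans Glue.low_bot.symm)), Glue.exists_nodes hxy⟩
  obtain ⟨J, _, _, _, _, t, q, hbig, hq, ht, hsurj⟩ := exists_index La (Glue x) ⊥
  obtain ⟨i, j, hij⟩ := exists_pair_ne J
  have h1 : CPEmb (Glue x) (Box (Frame.marking t : Marking (Frame La J) (Glue x))) (D _) :=
    cpEmb_D Frame.sepHyp (Frame.simpleHyp ⟨q i, q j, fun h => hij (hq h), ht i, ht j⟩)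
  have h2 : CPEmb Lc (Box (mT Lc)) (D _) := cpEmb_D sepHyp_mT simpleHyp_mT
  refine ⟨Box (Frame.marking t : Marking (Frame La J) (Glue x)), inferInstance,
    fun a => gen _ (Frame.a a) (Glue.low x x), D _ ∘ Glue.low x ∘ D _, ?_, ?_,
    apEmb_gen hbig q hq ht hsurj hnode, CPEmb.comp h1 (CPEmb.comp Glue.cpEmb_low h2)⟩
  · have : gen (Frame.marking t : Marking (Frame La J) (Glue x)) (Frame.a ⊥) (Glue.low x x) = ⊥ :=
      gen_bot_left _
    change IsBot (gen (Frame.marking t : Marking (Frame La J) (Glue x)) (Frame.a ⊥) (Glue.low x x))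
    rw [this]
    exact isBot_bot
  · simp only [Function.comp_apply, D_bot, Glue.low_bot]
    exact isBot_bot

/-- Restricting an automorphism-preserving embedding from `WithTop A`, for a one-element `A`, to
`A`; both lattices have only the identity automorphism. -/
lemma apEmb_of_withTop {A L : Type*} [Lattice A] [OrderBot A] [Subsingleton A] [Lattice L]
    {f : WithTop A → L} (hf : APEmb (WithTop A) L f) : APEmb A L fun a => f a := by
  obtain ⟨h1, h2, h3, h4, h5⟩ := hf
  have triv : ∀ α, IsLatAuto (WithTop A) α → ∀ x, α x = x := by
    intro α hα x
    induction x with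
    | top => exact map_top (isoOfAuto hα)
    | coe a =>
      rw [Subsingleton.elim a ⊥]
      exact map_bot (isoOfAuto hα)
  have fix : ∀ β, IsLatAuto L β → ∀ x, β (f x) = f x := by
    intro β hβ x
    obtain ⟨α, hα, h⟩ := h5 β hβ
    rw [h, triv α hα]
  have idA : IsLatAuto A id := ⟨Function.bijective_id, fun _ _ => rfl, fun _ _ => rfl⟩
  refine ⟨fun a b _ => Subsingleton.elim a b, fun a b => ?_, fun a b => ?_, fun α hα => ?_,
    fun β hβ => ⟨id, idA, fun a => fix β hβ a⟩⟩
  · rw [← h2]; rfl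
  · rw [← h3]; rfl
  · obtain ⟨β, ⟨hβ, -⟩, huniq⟩ := h4 id ⟨Function.bijective_id, fun _ _ => rfl, fun _ _ => rfl⟩
    refine ⟨β, ⟨hβ, fun a => ?_⟩, fun β' hβ' => huniq β' ⟨hβ'.1, fix β' hβ'.1⟩⟩
    rw [fix β hβ, Subsingleton.elim (α a) a]

end StrongInd

theorem strong_independence_lattices_with_zero
    (La Lc : Type u) [instA : Lattice La] [instA0 : OrderBot La]
    [instC : Lattice Lc] [instC0 : OrderBot Lc] [Nontrivial Lc] :
    ∃ (L : Type u) (instL : Lattice L) (f : La → L) (g : Lc → L),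
      @StrongIndWitness₀ La Lc instA instA0 instC instC0 L instL f g := by
  rcases subsingleton_or_nontrivial La with _ | _
  · obtain ⟨L, instL, f, g, h1, h2, h3, h4⟩ := StrongInd.exists_of_nontrivial (WithTop La) Lc
    exact ⟨L, instL, fun a => f a, g, h1, h2, StrongInd.apEmb_of_withTop h3, h4⟩
  · exact StrongInd.exists_of_nontrivial La Lc
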